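/- (Generalized factorization.) Let 1 < p, s < ∞. A weight w belongs to A_p ∩ RH_s if and only if there exist weights v₁, v₂ such that w = v₁ v₂, v₁ ∈ A_1 ∩ RH_s, and v₂ ∈ A_p ∩ RH_∞. -/

import Mathlib

open MeasureTheory ENNReal
open scoped Classical

noncomputable section

variable {n : ℕ}

/-- An axis-parallel half-open cube in `ℝⁿ`. -/
def IsCube (Q : Set (Fin n → ℝ)) : Prop :=
  ∃ (a : Fin n → ℝ) (l : ℝ), 0 < l ∧ Q = {x | ∀ i, a i ≤ x i ∧ x i < a i + l}

/-- The average `⨍_Q f` of an `ℝ≥0∞`-valued function over a set, w.r.t. Lebesgue measure. -/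
def eavg (Q : Set (Fin n → ℝ)) (f : (Fin n → ℝ) → ℝ≥0∞) : ℝ≥0∞ :=
  (∫⁻ x in Q, f x) / volume Q

/-- A weight: measurable, a.e. positive and finite, and locally integrable. -/
def IsWeight (w : (Fin n → ℝ) → ℝ≥0∞) : Prop :=
  Measurable w ∧ (∀ᵐ x ∂(volume : Measure (Fin n → ℝ)), 0 < w x ∧ w x < ∞) ∧
    ∀ Q : Set (Fin n → ℝ), IsCube Q → ∫⁻ x in Q, w x < ∞

/-- The Muckenhoupt `A_p` constant, `1 ≤ p < ∞` (ess-sup form when `p = 1`). -/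
def ApConst (p : ℝ) (w : (Fin n → ℝ) → ℝ≥0∞) : ℝ≥0∞ :=
  if p = 1 then
    ⨆ (Q : Set (Fin n → ℝ)) (_ : IsCube Q),
      essSup (fun x => eavg Q w / w x) (volume.restrict Q)
  else
    ⨆ (Q : Set (Fin n → ℝ)) (_ : IsCube Q),
      eavg Q w * (eavg Q fun x => w x ^ (1 - p / (p - 1))) ^ (p - 1)

/-- Membership in the Muckenhoupt class `A_p`. -/
def MemAp (p : ℝ) (w : (Fin n → ℝ) → ℝ≥0∞) : Prop := ApConst p w < ∞

/-- The reverse Hölder `RH_s` constant. -/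
def RHConst (s : ℝ) (w : (Fin n → ℝ) → ℝ≥0∞) : ℝ≥0∞ :=
  ⨆ (Q : Set (Fin n → ℝ)) (_ : IsCube Q),
    (eavg Q fun x => w x ^ s) ^ (1 / s) / eavg Q w

/-- Membership in the reverse Hölder class `RH_s`. -/
def MemRH (s : ℝ) (w : (Fin n → ℝ) → ℝ≥0∞) : Prop := RHConst s w < ∞

/-- The `RH_∞` constant. -/
def RHInfConst (w : (Fin n → ℝ) → ℝ≥0∞) : ℝ≥0∞ :=
  ⨆ (Q : Set (Fin n → ℝ)) (_ : IsCube Q),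
    essSup (fun x => w x / eavg Q w) (volume.restrict Q)

/-- Membership in `RH_∞`. -/
def MemRHInf (w : (Fin n → ℝ) → ℝ≥0∞) : Prop := RHInfConst w < ∞

/-- The Hardy–Littlewood maximal operator (over all cubes containing `x`). -/
def maximal (f : (Fin n → ℝ) → ℝ) (x : Fin n → ℝ) : ℝ≥0∞ :=
  ⨆ (Q : Set (Fin n → ℝ)) (_ : IsCube Q) (_ : x ∈ Q),
    eavg Q fun y => ENNReal.ofReal |f y|

/-- The Hardy–Littlewood maximal operator acting on `ℝ≥0∞`-valued functions. -/
def emaximal (f : (Fin n → ℝ) → ℝ≥0∞) (x : Fin n → ℝ) : ℝ≥0∞ :=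
  ⨆ (Q : Set (Fin n → ℝ)) (_ : IsCube Q) (_ : x ∈ Q), eavg Q f

/-- The norm `‖f‖_{L^p(w)} = (∫ f^p w dx)^(1/p)`. -/
def wLpNorm (p : ℝ) (w f : (Fin n → ℝ) → ℝ≥0∞) : ℝ≥0∞ :=
  (∫⁻ x, f x ^ p * w x) ^ (1 / p)

/-!
The factors come from Jones's theorem: every `w` in `A_p` is `u₁ u₂ ^ (1 - p)` with `u₁, u₂` in
`A_1`. By Muckenhoupt's theorem, the operators
`f ↦ (M(f ^ (p - 1) w ^ (1 / p)) w ^ (-1 / p)) ^ (1 / (p - 1))` and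
`f ↦ M(f w ^ (-1 / p)) w ^ (1 / p)` are bounded on `L^p`, hence some `η > 0` dominates its image
under both of them up to a constant; then `u₁ = η ^ (p - 1) w ^ (1 / p)` and
`u₂ = η w ^ (-1 / p)` satisfy `M uᵢ ≤ C uᵢ`.

A weight `w` in `A_p ∩ RH_s` has `w ^ s` in `A_r` for `r = s (p - 1) + 1`, so that
`w ^ s = u₁ u₂ ^ (s (1 - p))`, and `w = u₁ ^ (1 / s) u₂ ^ (1 - p)` is the required factorization:
an `A_1` weight has its `s`-th root in `A_1 ∩ RH_s` by Jensen's inequality, and its `1 - p` power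
in `A_p ∩ RH_∞`. Conversely, on a cube an `A_1` weight is bounded below, and an `RH_∞` weight
above, by a multiple of its average, which lets the average of a product be compared with the
product of the averages.
-/

section Averages

variable {α : Type*} [MeasurableSpace α] {μ : Measure α}

lemma laverage_const_mul {c : ℝ≥0∞} (hc : c ≠ ∞) (f : α → ℝ≥0∞) :
    ⨍⁻ x, c * f x ∂μ = c * ⨍⁻ x, f x ∂μ := by
  rw [laverage_eq, laverage_eq, lintegral_const_mul' _ _ hc, mul_div_assoc]

lemma setLAverage_const_le (c : ℝ≥0∞) (s : Set α) : ⨍⁻ _ in s, c ∂μ ≤ c := by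
  rw [setLAverage_eq, setLIntegral_const]
  exact ENNReal.div_le_of_le_mul le_rfl

lemma laverage_ne_zero [IsFiniteMeasure μ] [NeZero μ] {f : α → ℝ≥0∞} (hf : AEMeasurable f μ)
    (hpos : ∀ᵐ x ∂μ, f x ≠ 0) : ⨍⁻ x, f x ∂μ ≠ 0 := by
  rw [laverage_eq]
  refine ENNReal.div_ne_zero.2 ⟨fun hzero => ?_, measure_ne_top μ _⟩
  obtain ⟨x, hx, hx'⟩ := (hpos.and ((lintegral_eq_zero_iff' hf).1 hzero)).exists
  exact hx hx'

lemma laverage_rpow_le_laverage_rpow {f : α → ℝ≥0∞} {s : ℝ} (hs : 1 ≤ s)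
    (hf : AEMeasurable f μ) : (⨍⁻ x, f x ∂μ) ^ s ≤ ⨍⁻ x, f x ^ s ∂μ := by
  have hs₀ : 0 < s := zero_lt_one.trans_le hs
  set ν : Measure α := (μ Set.univ)⁻¹ • μ with hν
  have hmass : ν Set.univ ≤ 1 := by
    simp [hν, ENNReal.inv_mul_le_one]
  have hnorm := eLpNorm'_le_eLpNorm'_mul_rpow_measure_univ (μ := ν) zero_lt_one hs
    (hf.smul_measure _).aestronglyMeasurable
  have hmass_rpow : ν Set.univ ^ (1 / 1 - 1 / s) ≤ 1 :=
    ENNReal.rpow_le_one hmass (by rw [sub_nonneg, one_div_one]; exact div_le_one_of_le₀ hs hs₀.le)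
  have hle := hnorm.trans (mul_le_of_le_one_right' hmass_rpow)
  simp only [eLpNorm'_eq_lintegral_enorm, enorm_eq_self, ENNReal.rpow_one, div_one,
    one_div] at hle
  exact (ENNReal.le_rpow_inv_iff hs₀).1 hle

lemma laverage_rpow_inv_le {f : α → ℝ≥0∞} {s : ℝ} (hs : 1 ≤ s) (hf : AEMeasurable f μ) :
    ⨍⁻ x, f x ^ s⁻¹ ∂μ ≤ (⨍⁻ x, f x ∂μ) ^ s⁻¹ := by
  have hs₀ : 0 < s := zero_lt_one.trans_le hs
  rw [ENNReal.le_rpow_inv_iff hs₀]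
  simpa only [ENNReal.rpow_inv_rpow hs₀.ne'] using
    laverage_rpow_le_laverage_rpow hs (hf.pow_const s⁻¹)

lemma laverage_mul_rpow_le {f g : α → ℝ≥0∞} {s : ℝ} (hs : 0 ≤ s) {B : ℝ≥0∞} (hB : B ≠ ∞)
    (hg : ∀ᵐ x ∂μ, g x ≤ B) : ⨍⁻ x, (f x * g x) ^ s ∂μ ≤ B ^ s * ⨍⁻ x, f x ^ s ∂μ := by
  rw [← laverage_const_mul (by finiteness)]
  refine laverage_mono_ae ?_
  filter_upwards [hg] with x hx
  rw [ENNReal.mul_rpow_of_nonneg _ _ hs, mul_comm]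
  gcongr

/-- Hölder's inequality for `1 = w ^ p⁻¹ * w ^ (-p⁻¹)`. -/
lemma measure_univ_rpow_le_lintegral_mul {p q : ℝ} (hpq : p.HolderConjugate q) {w : α → ℝ≥0∞}
    (hw : AEMeasurable w μ) (hpos : ∀ᵐ x ∂μ, w x ≠ 0) (hfin : ∀ᵐ x ∂μ, w x ≠ ∞) :
    μ Set.univ ^ p ≤ (∫⁻ x, w x ∂μ) * (∫⁻ x, w x ^ (1 - q) ∂μ) ^ (p - 1) := by
  have hp := hpq.pos
  have hq : p⁻¹ + (1 - q) * q⁻¹ = 0 := by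
    have := hpq.inv_add_inv_eq_one
    have := hpq.symm.ne_zero
    field_simp at *
    linarith
  have hone : ∀ᵐ x ∂μ, w x ^ p⁻¹ * (w x ^ (1 - q)) ^ q⁻¹ = 1 := by
    filter_upwards [hpos, hfin] with x h0 ht
    rw [← ENNReal.rpow_mul, ← ENNReal.rpow_add _ _ h0 ht, hq, ENNReal.rpow_zero]
  have hholder := ENNReal.lintegral_mul_norm_pow_le hw (hw.pow_const (1 - q))
    (inv_nonneg.2 hp.le) (inv_nonneg.2 hpq.symm.pos.le) hpq.inv_add_inv_eq_one
  rw [lintegral_congr_ae hone, lintegral_one] at hholder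
  calc μ Set.univ ^ p
      ≤ ((∫⁻ x, w x ∂μ) ^ p⁻¹ * (∫⁻ x, w x ^ (1 - q) ∂μ) ^ q⁻¹) ^ p :=
        ENNReal.rpow_le_rpow hholder hp.le
    _ = _ := by
        rw [ENNReal.mul_rpow_of_nonneg _ _ hp.le, ← ENNReal.rpow_mul, ← ENNReal.rpow_mul,
          inv_mul_cancel₀ hp.ne', ENNReal.rpow_one, inv_mul_eq_div, hpq.div_conj_eq_sub_one]

lemma one_le_laverage_mul_rpow [IsFiniteMeasure μ] [NeZero μ] {p q : ℝ}
    (hpq : p.HolderConjugate q) {w : α → ℝ≥0∞} (hw : AEMeasurable w μ)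
    (hpos : ∀ᵐ x ∂μ, w x ≠ 0) (hfin : ∀ᵐ x ∂μ, w x ≠ ∞) :
    1 ≤ (⨍⁻ x, w x ∂μ) * (⨍⁻ x, w x ^ (1 - q) ∂μ) ^ (p - 1) := by
  set c := (μ Set.univ)⁻¹
  have : IsProbabilityMeasure (c • μ) := isProbabilityMeasureSMul
  have hac : c • μ ≪ μ := Measure.smul_absolutelyContinuous
  simpa [laverage] using measure_univ_rpow_le_lintegral_mul (μ := c • μ) hpq
    (hw.smul_measure _) (hac.ae_le hpos) (hac.ae_le hfin)

lemma setLAverage_withDensity_div {σ f : α → ℝ≥0∞} (hσ : Measurable σ) (hf : Measurable f)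
    (hpos : ∀ᵐ x ∂μ, σ x ≠ 0) (hfin : ∀ᵐ x ∂μ, σ x ≠ ∞) {s : Set α} (hs : MeasurableSet s)
    (h0 : μ s ≠ 0) (ht : μ s ≠ ∞) :
    ⨍⁻ x in s, f x / σ x ∂μ.withDensity σ = (⨍⁻ x in s, f x ∂μ) / ⨍⁻ x in s, σ x ∂μ := by
  have hint : ∫⁻ x in s, f x / σ x ∂μ.withDensity σ = ∫⁻ x in s, f x ∂μ := by
    refine (setLIntegral_withDensity_eq_setLIntegral_mul μ hσ (hf.div hσ) hs).trans ?_
    refine lintegral_congr_ae (ae_restrict_of_ae ?_)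
    filter_upwards [hpos, hfin] with x h0 ht using ENNReal.mul_div_cancel h0 ht
  rw [setLAverage_eq, setLAverage_eq, setLAverage_eq, hint, withDensity_apply _ hs]
  simp only [div_eq_mul_inv (b := μ s)]
  exact (ENNReal.mul_div_mul_right _ _ (ENNReal.inv_ne_zero.2 ht) (ENNReal.inv_ne_top.2 h0)).symm

end Averages

section LayerCake

variable {α : Type*} [MeasurableSpace α] {μ : Measure α}

lemma setLIntegral_Ioi_rpow_eq_top (s : ℝ) :
    ∫⁻ t in Set.Ioi (0 : ℝ), ENNReal.ofReal (t ^ s) = ∞ := by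
  by_contra hfin
  refine not_integrableOn_Ioi_rpow s ⟨by fun_prop, ?_⟩
  rw [hasFiniteIntegral_iff_ofReal]
  · exact Ne.lt_top hfin
  · filter_upwards [ae_restrict_mem measurableSet_Ioi] with t ht using Real.rpow_nonneg ht.le s

/-- Unlike `lintegral_rpow_eq_lintegral_meas_lt_mul`, this allows `f` to be infinite. -/
lemma lintegral_rpow_eq_lintegral_meas_ofReal_lt_mul {f : α → ℝ≥0∞} (hf : AEMeasurable f μ)
    {p : ℝ} (hp : 0 < p) :
    ∫⁻ x, f x ^ p ∂μ = ENNReal.ofReal p * ∫⁻ t in Set.Ioi (0 : ℝ),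
      μ {x | ENNReal.ofReal t < f x} * ENNReal.ofReal (t ^ (p - 1)) := by
  by_cases htop : μ {x | f x = ∞} = 0
  · have hfin : ∀ᵐ x ∂μ, f x ≠ ∞ := measure_eq_zero_iff_ae_notMem.1 htop
    have hcake := lintegral_rpow_eq_lintegral_meas_lt_mul μ (f := fun x => (f x).toReal)
      (ae_of_all _ fun _ => ENNReal.toReal_nonneg) hf.ennreal_toReal hp
    have hleft : ∫⁻ x, ENNReal.ofReal ((f x).toReal ^ p) ∂μ = ∫⁻ x, f x ^ p ∂μ := by
      refine lintegral_congr_ae ?_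
      filter_upwards [hfin] with x hx
      rw [ENNReal.toReal_rpow, ENNReal.ofReal_toReal (ENNReal.rpow_ne_top_of_nonneg hp.le hx)]
    rw [← hleft, hcake]
    congr 1
    refine setLIntegral_congr_fun measurableSet_Ioi fun t ht => ?_
    congr 1
    refine measure_congr ?_
    filter_upwards [hfin] with x hx
    exact propext (ENNReal.ofReal_lt_iff_lt_toReal (le_of_lt ht) hx).symm
  · have hleft : ∫⁻ x, f x ^ p ∂μ = ∞ := by
      refine lintegral_eq_top_of_measure_eq_top_ne_zero (hf.pow_const p) ?_
      simpa only [ENNReal.rpow_eq_top_iff_of_pos hp] using htop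
    have hright : ∫⁻ t in Set.Ioi (0 : ℝ),
        μ {x | ENNReal.ofReal t < f x} * ENNReal.ofReal (t ^ (p - 1)) = ∞ := by
      refine top_le_iff.1 ?_
      calc ∞ = μ {x | f x = ∞} * ∫⁻ t in Set.Ioi (0 : ℝ), ENNReal.ofReal (t ^ (p - 1)) := by
            rw [setLIntegral_Ioi_rpow_eq_top, ENNReal.mul_top htop]
        _ = ∫⁻ t in Set.Ioi (0 : ℝ), μ {x | f x = ∞} * ENNReal.ofReal (t ^ (p - 1)) :=
            (lintegral_const_mul _ (by fun_prop)).symm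
        _ ≤ _ := by
            gcongr with t x
            rintro (hx : f x = ∞)
            exact hx ▸ ENNReal.ofReal_lt_top
    rw [hleft, hright, ENNReal.mul_top (ENNReal.ofReal_pos.2 hp).ne']

end LayerCake

section MaximalFunction

open Metric

variable {α : Type*} [PseudoMetricSpace α] [MeasurableSpace α]

/-- The uncentered Hardy–Littlewood maximal function of `f` with respect to `μ`: the supremum of
the averages of `f` over the open balls containing the given point. -/
def maximalFunction (μ : Measure α) (f : α → ℝ≥0∞) (x : α) : ℝ≥0∞ :=
  ⨆ (c : α) (r : ℝ) (_ : x ∈ ball c r), ⨍⁻ y in ball c r, f y ∂μ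

variable {μ : Measure α} {f : α → ℝ≥0∞}

lemma setLAverage_le_maximalFunction {x c : α} {r : ℝ} (hx : x ∈ ball c r) :
    ⨍⁻ y in ball c r, f y ∂μ ≤ maximalFunction μ f x :=
  le_iSup₂_of_le c r (le_iSup_of_le hx le_rfl)

lemma maximalFunction_le {x : α} {t : ℝ≥0∞}
    (h : ∀ c r, x ∈ ball c r → ⨍⁻ y in ball c r, f y ∂μ ≤ t) : maximalFunction μ f x ≤ t :=
  iSup₂_le fun c r => iSup_le (h c r)

lemma lt_maximalFunction_iff {x : α} {t : ℝ≥0∞} :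
    t < maximalFunction μ f x ↔ ∃ c r, x ∈ ball c r ∧ t < ⨍⁻ y in ball c r, f y ∂μ := by
  simp only [maximalFunction, lt_iSup_iff, exists_prop]

lemma isOpen_lt_maximalFunction (t : ℝ≥0∞) : IsOpen {x | t < maximalFunction μ f x} := by
  have hunion : {x | t < maximalFunction μ f x} =
      ⋃ (c : α) (r : ℝ) (_ : t < ⨍⁻ y in ball c r, f y ∂μ), ball c r := by
    ext x
    simp only [lt_maximalFunction_iff, Set.mem_ofPred_eq, Set.mem_iUnion, exists_prop, and_comm]
  rw [hunion]
  exact isOpen_iUnion fun c => isOpen_iUnion fun r => isOpen_iUnion fun _ => isOpen_ball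

lemma measurable_maximalFunction [OpensMeasurableSpace α] :
    Measurable (maximalFunction μ f) :=
  measurable_of_Ioi fun t => (isOpen_lt_maximalFunction t).measurableSet

lemma maximalFunction_mono : Monotone (maximalFunction μ) := fun _ _ h _ =>
  iSup₂_mono fun _ _ => iSup_mono fun _ => laverage_mono_ae (ae_of_all _ h)

lemma maximalFunction_le_add_const {g : α → ℝ≥0∞} {t : ℝ≥0∞} (h : ∀ x, f x ≤ g x + t) (x : α) :
    maximalFunction μ f x ≤ maximalFunction μ g x + t := by
  refine maximalFunction_le fun c r hx => ?_
  calc ⨍⁻ y in ball c r, f y ∂μ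
      ≤ ⨍⁻ y in ball c r, (g y + t) ∂μ := laverage_mono_ae (ae_of_all _ h)
    _ = (⨍⁻ y in ball c r, g y ∂μ) + ⨍⁻ _ in ball c r, t ∂μ :=
        lintegral_add_right _ measurable_const
    _ ≤ maximalFunction μ g x + t :=
        add_le_add (setLAverage_le_maximalFunction hx) (setLAverage_const_le t _)

lemma maximalFunction_iSup_le {f : ℕ → α → ℝ≥0∞} (hf : ∀ k, Measurable (f k))
    (hmono : Monotone f) (x : α) :
    maximalFunction μ (fun y => ⨆ k, f k y) x ≤ ⨆ k, maximalFunction μ (f k) x := by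
  refine maximalFunction_le fun c r hx => ?_
  rw [show ⨍⁻ y in ball c r, ⨆ k, f k y ∂μ = ⨆ k, ⨍⁻ y in ball c r, f k y ∂μ from
    lintegral_iSup hf hmono]
  exact iSup_mono fun k => setLAverage_le_maximalFunction hx

section Doubling

variable [TopologicalSpace.SeparableSpace α] [OpensMeasurableSpace α] {D : ℝ≥0∞}

/-- The Vitali step of the weak type inequality; the bound on the radii makes the covering lemma
applicable. -/
lemma mul_measure_iUnion_ball_le (hD : ∀ c r, μ (ball c (5 * r)) ≤ D * μ (ball c r))
    {t : ℝ≥0∞} {R : ℝ} {B : Set (α × ℝ)} (hR : ∀ b ∈ B, b.2 ≤ R)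
    (hB : ∀ b ∈ B, t < ⨍⁻ y in ball b.1 b.2, f y ∂μ) :
    t * μ (⋃ b ∈ B, ball b.1 b.2) ≤ D * ∫⁻ x, f x ∂μ := by
  obtain ⟨u, huB, hdisj, hcover⟩ :=
    Vitali.exists_disjoint_subfamily_covering_enlargement_ball B Prod.fst Prod.snd R hR 5
      (by norm_num)
  have hne : ∀ b ∈ u, (ball b.1 b.2).Nonempty := fun b hb => by
    by_contra hempty
    have := hB b (huB hb)
    simp [Set.not_nonempty_iff_eq_empty.1 hempty] at this
  have hcount : u.Countable := hdisj.countable_of_isOpen (fun _ _ => isOpen_ball) hne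
  calc t * μ (⋃ b ∈ B, ball b.1 b.2)
      ≤ t * μ (⋃ b ∈ u, ball b.1 (5 * b.2)) := by
        gcongr t * μ ?_
        refine Set.iUnion₂_subset fun a ha => ?_
        obtain ⟨b, hb, hab⟩ := hcover a ha
        exact hab.trans (Set.subset_biUnion_of_mem (u := fun b => ball b.1 (5 * b.2)) hb)
    _ ≤ t * ∑' b : u, D * μ (ball b.1.1 b.1.2) := by
        gcongr
        exact (measure_biUnion_le μ hcount _).trans (ENNReal.tsum_le_tsum fun b => hD _ _)
    _ = D * ∑' b : u, t * μ (ball b.1.1 b.1.2) := by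
        rw [ENNReal.tsum_mul_left, ENNReal.tsum_mul_left, mul_left_comm]
    _ ≤ D * ∑' b : u, ∫⁻ x in ball b.1.1 b.1.2, f x ∂μ := by
        gcongr with b
        have hlt := hB b (huB b.2)
        rw [setLAverage_eq] at hlt
        exact ENNReal.mul_le_of_le_div hlt.le
    _ = D * ∫⁻ x in ⋃ b ∈ u, ball b.1 b.2, f x ∂μ := by
        rw [lintegral_biUnion hcount (fun _ _ => measurableSet_ball) hdisj]
    _ ≤ D * ∫⁻ x, f x ∂μ := by
        gcongr
        exact Measure.restrict_le_self

lemma mul_measure_lt_maximalFunction_le (hD : ∀ c r, μ (ball c (5 * r)) ≤ D * μ (ball c r))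
    (f : α → ℝ≥0∞) (t : ℝ≥0∞) :
    t * μ {x | t < maximalFunction μ f x} ≤ D * ∫⁻ x, f x ∂μ := by
  let B (k : ℕ) : Set (α × ℝ) := {b | b.2 ≤ k ∧ t < ⨍⁻ y in ball b.1 b.2, f y ∂μ}
  have hmono : Monotone fun k => ⋃ b ∈ B k, ball b.1 b.2 := fun j k hjk =>
    Set.biUnion_subset_biUnion_left fun b hb => ⟨hb.1.trans (Nat.cast_le.2 hjk), hb.2⟩
  have hunion : {x | t < maximalFunction μ f x} = ⋃ k, ⋃ b ∈ B k, ball b.1 b.2 := by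
    ext x
    simp only [Set.mem_ofPred_eq, lt_maximalFunction_iff, Set.mem_iUnion, B, exists_prop]
    constructor
    · rintro ⟨c, r, hx, ht⟩
      obtain ⟨k, hk⟩ := exists_nat_ge r
      exact ⟨k, (c, r), ⟨hk, ht⟩, hx⟩
    · rintro ⟨k, b, ⟨-, ht⟩, hx⟩
      exact ⟨b.1, b.2, hx, ht⟩
  rw [hunion, hmono.measure_iUnion, ENNReal.mul_iSup]
  exact iSup_le fun k => mul_measure_iUnion_ball_le hD (fun b hb => hb.1) fun b hb => hb.2

lemma mul_measure_two_mul_lt_maximalFunction_le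
    (hD : ∀ c r, μ (ball c (5 * r)) ≤ D * μ (ball c r)) (hf : Measurable f) (t : ℝ≥0∞) :
    t * μ {x | 2 * t < maximalFunction μ f x} ≤ D * ∫⁻ x in {x | t < f x}, f x ∂μ := by
  set g := {x | t < f x}.indicator f
  have hfg : ∀ x, f x ≤ g x + t := fun x => by
    by_cases hx : t < f x
    · simp [g, hx]
    · exact (not_lt.1 hx).trans le_add_self
  have hsub : {x | 2 * t < maximalFunction μ f x} ⊆ {x | t < maximalFunction μ g x} := by
    intro x (hx : 2 * t < _)
    by_contra hg
    refine hx.not_ge ((maximalFunction_le_add_const hfg x).trans ?_)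
    rw [two_mul]
    exact add_le_add_left (not_lt.1 hg) t
  calc t * μ {x | 2 * t < maximalFunction μ f x}
      ≤ t * μ {x | t < maximalFunction μ g x} := by gcongr
    _ ≤ D * ∫⁻ x, g x ∂μ := mul_measure_lt_maximalFunction_le hD g t
    _ = D * ∫⁻ x in {x | t < f x}, f x ∂μ := by
        rw [lintegral_indicator (measurableSet_lt measurable_const hf)]

lemma measure_lt_maximalFunction_div_two_mul_rpow_le
    (hD : ∀ c r, μ (ball c (5 * r)) ≤ D * μ (ball c r)) (hf : Measurable f) {t : ℝ} (ht : 0 < t)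
    (b : ℝ) :
    μ {x | ENNReal.ofReal t < maximalFunction μ f x / 2} * ENNReal.ofReal (t ^ b) ≤
      D * (μ.withDensity f {x | ENNReal.ofReal t < f x} * ENNReal.ofReal (t ^ (b - 1))) := by
  have hset : {x | ENNReal.ofReal t < maximalFunction μ f x / 2} =
      {x | 2 * ENNReal.ofReal t < maximalFunction μ f x} := by
    simp only [ENNReal.lt_div_iff_mul_lt (Or.inl two_ne_zero) (Or.inl ofNat_ne_top), mul_comm]
  have hpow : t ^ b = t * t ^ (b - 1) := by
    rw [Real.rpow_sub_one ht.ne', mul_div_cancel₀ _ ht.ne']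
  rw [hset, hpow, ENNReal.ofReal_mul ht.le, ← mul_assoc, ← mul_assoc,
    mul_comm (μ _), withDensity_apply _ (measurableSet_lt measurable_const hf)]
  exact mul_le_mul_left (mul_measure_two_mul_lt_maximalFunction_le hD hf _) _

/-- The strong type inequality by Marcinkiewicz interpolation: the truncated weak type bound is
integrated over all levels, and the result is recognized as the layer cake formula for
`f ^ (a - 1)` and the measure with density `f`. -/
lemma lintegral_maximalFunction_rpow_le (hD : ∀ c r, μ (ball c (5 * r)) ≤ D * μ (ball c r))
    (hD' : D ≠ ∞) (hf : Measurable f) {a : ℝ} (ha : 1 < a) :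
    ∫⁻ x, maximalFunction μ f x ^ a ∂μ
      ≤ 2 ^ a * ENNReal.ofReal (a / (a - 1)) * D * ∫⁻ x, f x ^ a ∂μ := by
  have ha₀ : 0 < a := zero_lt_one.trans ha
  have ha₁ : 0 < a - 1 := sub_pos.2 ha
  have hM : Measurable (maximalFunction μ f) := measurable_maximalFunction
  set L := ∫⁻ t in Set.Ioi (0 : ℝ),
    μ.withDensity f {x | ENNReal.ofReal t < f x} * ENNReal.ofReal (t ^ (a - 1 - 1))
  have hdensity : ∫⁻ x, f x ^ a ∂μ = ENNReal.ofReal (a - 1) * L := by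
    rw [← lintegral_rpow_eq_lintegral_meas_ofReal_lt_mul hf.aemeasurable ha₁,
      lintegral_withDensity_eq_lintegral_mul _ hf (hf.pow_const _)]
    refine lintegral_congr fun x => ?_
    rw [Pi.mul_apply, ← add_sub_cancel 1 a, ENNReal.rpow_add_of_nonneg _ _ zero_le_one ha₁.le,
      ENNReal.rpow_one, add_sub_cancel]
  have hratio : ENNReal.ofReal a = ENNReal.ofReal (a / (a - 1)) * ENNReal.ofReal (a - 1) := by
    rw [← ENNReal.ofReal_mul (by positivity), div_mul_cancel₀ _ ha₁.ne']
  calc ∫⁻ x, maximalFunction μ f x ^ a ∂μ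
      = ∫⁻ x, 2 ^ a * (maximalFunction μ f x / 2) ^ a ∂μ := by
        refine lintegral_congr fun x => ?_
        rw [← ENNReal.mul_rpow_of_nonneg _ _ ha₀.le,
          ENNReal.mul_div_cancel two_ne_zero ofNat_ne_top]
    _ = 2 ^ a * (ENNReal.ofReal a * ∫⁻ t in Set.Ioi (0 : ℝ),
          μ {x | ENNReal.ofReal t < maximalFunction μ f x / 2} * ENNReal.ofReal (t ^ (a - 1))) := by
        rw [lintegral_const_mul _ (by fun_prop),
          lintegral_rpow_eq_lintegral_meas_ofReal_lt_mul (by fun_prop) ha₀]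
    _ ≤ 2 ^ a * (ENNReal.ofReal a * (D * L)) := by
        rw [← lintegral_const_mul' _ _ hD']
        gcongr _ * (_ * ?_)
        exact setLIntegral_mono' measurableSet_Ioi fun t ht =>
          measure_lt_maximalFunction_div_two_mul_rpow_le hD hf ht _
    _ = 2 ^ a * ENNReal.ofReal (a / (a - 1)) * D * ∫⁻ x, f x ^ a ∂μ := by
        rw [hdensity, hratio]
        ring

end Doubling

end MaximalFunction

section Iteration

variable {α : Type*} [MeasurableSpace α] {μ : Measure α}

/-- An operator on nonnegative functions that preserves measurability, is monotone, and is
continuous along increasing sequences of measurable functions; only the nontrivial inequality of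
the continuity is recorded. -/
structure IsMonotoneContinuous (T : (α → ℝ≥0∞) → α → ℝ≥0∞) : Prop where
  measurable : ∀ ⦃f⦄, Measurable f → Measurable (T f)
  mono : Monotone T
  iSup_le : ∀ ⦃f : ℕ → α → ℝ≥0∞⦄, (∀ k, Measurable (f k)) → Monotone f →
    ∀ x, T (fun y => ⨆ k, f k y) x ≤ ⨆ k, T (f k) x

lemma isMonotoneContinuous_maximalFunction [PseudoMetricSpace α] [OpensMeasurableSpace α] :
    IsMonotoneContinuous (maximalFunction μ) where
  measurable _ _ := measurable_maximalFunction
  mono := maximalFunction_mono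
  iSup_le _ := maximalFunction_iSup_le

lemma isMonotoneContinuous_const {f : α → ℝ≥0∞} (hf : Measurable f) :
    IsMonotoneContinuous fun _ => f where
  measurable _ _ := hf
  mono := monotone_const
  iSup_le _ _ _ x := le_iSup (fun _ : ℕ => f x) 0

lemma iSup_ennreal_rpow {ι : Sort*} (a : ι → ℝ≥0∞) {s : ℝ} (hs : 0 < s) :
    (⨆ i, a i) ^ s = ⨆ i, a i ^ s :=
  (ENNReal.orderIsoRpow s hs).map_iSup a

lemma lintegral_sup_const_mul_rpow_le {f g : α → ℝ≥0∞} (hf : Measurable f) (hg : Measurable g)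
    {p : ℝ} (hp : 0 < p) (c : ℝ≥0∞) :
    ∫⁻ x, (f x ⊔ c * g x) ^ p ∂μ ≤ ∫⁻ x, f x ^ p ∂μ + c ^ p * ∫⁻ x, g x ^ p ∂μ := by
  rw [← lintegral_const_mul _ (hg.pow_const p), ← lintegral_add_left (hf.pow_const p)]
  refine lintegral_mono fun x => ?_
  rw [(ENNReal.monotone_rpow_of_nonneg hp.le).map_sup, ENNReal.mul_rpow_of_nonneg _ _ hp.le]
  exact max_le_add_of_nonneg zero_le zero_le

/-- The conjugate of `T` by the pointwise transformation `f ↦ f ^ ρ * U`. -/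
def powConj (ρ : ℝ) (U : α → ℝ≥0∞) (T : (α → ℝ≥0∞) → α → ℝ≥0∞) (f : α → ℝ≥0∞) (x : α) : ℝ≥0∞ :=
  (T (fun y => f y ^ ρ * U y) x / U x) ^ ρ⁻¹

namespace IsMonotoneContinuous

variable {S T : (α → ℝ≥0∞) → α → ℝ≥0∞}

lemma const_mul (hT : IsMonotoneContinuous T) (c : ℝ≥0∞) :
    IsMonotoneContinuous fun f x => c * T f x where
  measurable _ hf := (hT.measurable hf).const_mul c
  mono _ _ h x := mul_le_mul_right (hT.mono h x) c
  iSup_le _ hf hmono x := by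
    rw [← ENNReal.mul_iSup]
    exact mul_le_mul_right (hT.iSup_le hf hmono x) c

lemma sup (hS : IsMonotoneContinuous S) (hT : IsMonotoneContinuous T) :
    IsMonotoneContinuous fun f => S f ⊔ T f where
  measurable _ hf := (hS.measurable hf).sup (hT.measurable hf)
  mono := hS.mono.sup hT.mono
  iSup_le f hf hmono x := by
    simp only [Pi.sup_apply, iSup_sup_eq]
    exact sup_le_sup (hS.iSup_le hf hmono x) (hT.iSup_le hf hmono x)

lemma powConj (hT : IsMonotoneContinuous T) {ρ : ℝ} (hρ : 0 < ρ) {U : α → ℝ≥0∞}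
    (hU : Measurable U) : IsMonotoneContinuous (powConj ρ U T) where
  measurable f hf := ((hT.measurable ((hf.pow_const ρ).mul hU)).div hU).pow_const _
  mono f g h x := by
    unfold _root_.powConj
    gcongr
    refine hT.mono (fun y => ?_) x
    gcongr
    exact h y
  iSup_le f hf hmono x := by
    unfold _root_.powConj
    rw [← iSup_ennreal_rpow _ (inv_pos.2 hρ), ← ENNReal.iSup_div]
    simp only [iSup_ennreal_rpow _ hρ, ENNReal.iSup_mul]
    gcongr
    exact hT.iSup_le (fun k => ((hf k).pow_const ρ).mul hU) (fun j k hjk y =>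
      mul_le_mul_left (ENNReal.rpow_le_rpow (hmono hjk y) hρ.le) _) x

lemma exists_le_self {F : (α → ℝ≥0∞) → α → ℝ≥0∞} (hF : IsMonotoneContinuous F)
    {f : α → ℝ≥0∞} (hf : Measurable f) (hfF : f ≤ F f) {p : ℝ} (hp : 0 < p) {I : ℝ≥0∞}
    (hfI : ∫⁻ x, f x ^ p ∂μ ≤ I)
    (hFI : ∀ g, Measurable g → ∫⁻ x, g x ^ p ∂μ ≤ I → ∫⁻ x, F g x ^ p ∂μ ≤ I) :
    ∃ η, Measurable η ∧ f ≤ η ∧ ∫⁻ x, η x ^ p ∂μ ≤ I ∧ F η ≤ η := by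
  have hmono : Monotone fun k => F^[k] f := hF.mono.monotone_iterate_of_le_map hfF
  have hstep : ∀ k, Measurable (F^[k] f) ∧ ∫⁻ x, F^[k] f x ^ p ∂μ ≤ I := fun k => by
    induction k with
    | zero => exact ⟨hf, hfI⟩
    | succ k ih =>
      rw [Function.iterate_succ_apply']
      exact ⟨hF.measurable ih.1, hFI _ ih.1 ih.2⟩
  refine ⟨fun x => ⨆ k, F^[k] f x, .iSup fun k => (hstep k).1,
    fun x => le_iSup (fun k => F^[k] f x) 0, ?_, fun x => ?_⟩
  · simp only [iSup_ennreal_rpow _ hp]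
    rw [lintegral_iSup (fun k => (hstep k).1.pow_const p)
      fun j k hjk x => ENNReal.rpow_le_rpow (hmono hjk x) hp.le]
    exact _root_.iSup_le fun k => (hstep k).2
  · refine (hF.iSup_le (fun k => (hstep k).1) hmono x).trans (_root_.iSup_le fun k => ?_)
    rw [← Function.iterate_succ_apply' F]
    exact le_iSup (fun k => F^[k] f x) (k + 1)

/-- A substitute for the Rubio de Francia algorithm: instead of summing the iterates of `T`, take
the least function above `f` and `c * T η`, where `c ^ p * C ≤ 1 / 2`. -/
lemma exists_le_const_mul (hT : IsMonotoneContinuous T) {p : ℝ} (hp : 0 < p) {C : ℝ≥0∞}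
    (hC : C ≠ ∞)
    (hTC : ∀ g, Measurable g → ∫⁻ x, T g x ^ p ∂μ ≤ C * ∫⁻ x, g x ^ p ∂μ)
    {f : α → ℝ≥0∞} (hf : Measurable f) (hfin : ∫⁻ x, f x ^ p ∂μ ≠ ∞) :
    ∃ η, Measurable η ∧ f ≤ η ∧ ∫⁻ x, η x ^ p ∂μ ≠ ∞ ∧
      ∃ A : ℝ≥0∞, A ≠ ∞ ∧ ∀ x, T η x ≤ A * η x := by
  have hC' : 2 * (C + 1) ≠ ∞ := by finiteness
  set c : ℝ≥0∞ := (2 * (C + 1))⁻¹ ^ p⁻¹ with hc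
  have hc₀ : c ≠ 0 := by
    simpa [hc, ENNReal.rpow_eq_zero_iff, hp, hp.le.not_gt] using hC'
  have hc_top : c ≠ ∞ := ENNReal.rpow_ne_top_of_nonneg (inv_nonneg.2 hp.le) (by simp)
  have hcC : c ^ p * C ≤ 2⁻¹ := by
    rw [hc, ENNReal.rpow_inv_rpow hp.ne', mul_comm, ← div_eq_mul_inv]
    refine ENNReal.div_le_of_le_mul ?_
    rw [ENNReal.inv_mul_cancel_left two_ne_zero ofNat_ne_top]
    exact le_self_add
  obtain ⟨η, hη, hfη, hηI, hFη⟩ := ((isMonotoneContinuous_const hf).sup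
    (hT.const_mul c)).exists_le_self (μ := μ) hf le_sup_left hp (I := 2 * ∫⁻ x, f x ^ p ∂μ)
    (le_mul_of_one_le_left' one_le_two) fun g hg hgI => by
      calc ∫⁻ x, (f x ⊔ c * T g x) ^ p ∂μ
          ≤ ∫⁻ x, f x ^ p ∂μ + c ^ p * ∫⁻ x, T g x ^ p ∂μ :=
            lintegral_sup_const_mul_rpow_le hf (hT.measurable hg) hp c
        _ ≤ ∫⁻ x, f x ^ p ∂μ + c ^ p * (C * (2 * ∫⁻ x, f x ^ p ∂μ)) := by
            gcongr
            exact (hTC g hg).trans (mul_le_mul_right hgI C)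
        _ ≤ ∫⁻ x, f x ^ p ∂μ + 2⁻¹ * (2 * ∫⁻ x, f x ^ p ∂μ) := by
            rw [← mul_assoc (c ^ p)]
            gcongr
        _ = 2 * ∫⁻ x, f x ^ p ∂μ := by
            rw [ENNReal.inv_mul_cancel_left two_ne_zero ofNat_ne_top, two_mul]
  refine ⟨η, hη, hfη, ne_top_of_le_ne_top (by finiteness) hηI, c⁻¹, ENNReal.inv_ne_top.2 hc₀,
    fun x => ?_⟩
  rw [mul_comm, ← div_eq_mul_inv, ENNReal.le_div_iff_mul_le (Or.inl hc₀) (Or.inl hc_top),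
    mul_comm]
  exact le_sup_right.trans (hFη x)

end IsMonotoneContinuous

lemma lintegral_powConj_rpow_le {T : (α → ℝ≥0∞) → α → ℝ≥0∞} {U : α → ℝ≥0∞} (hU : Measurable U)
    (hpos : ∀ᵐ x ∂μ, U x ≠ 0) (hfin : ∀ᵐ x ∂μ, U x ≠ ∞) {ρ m : ℝ} (hρ : 0 < ρ) (hm : 0 < m)
    {C : ℝ≥0∞} (hT : ∀ g, Measurable g →
      ∫⁻ x, T g x ^ m * U x ^ (-m) ∂μ ≤ C * ∫⁻ x, g x ^ m * U x ^ (-m) ∂μ)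
    {f : α → ℝ≥0∞} (hf : Measurable f) :
    ∫⁻ x, powConj ρ U T f x ^ (ρ * m) ∂μ ≤ C * ∫⁻ x, f x ^ (ρ * m) ∂μ := by
  have hleft : ∀ x, powConj ρ U T f x ^ (ρ * m) =
      T (fun y => f y ^ ρ * U y) x ^ m * U x ^ (-m) := fun x => by
    rw [powConj, ← ENNReal.rpow_mul, inv_mul_cancel_left₀ hρ.ne',
      ENNReal.div_rpow_of_nonneg _ _ hm.le, div_eq_mul_inv, ENNReal.rpow_neg]
  have hright : ∀ᵐ x ∂μ, (f x ^ ρ * U x) ^ m * U x ^ (-m) = f x ^ (ρ * m) := by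
    filter_upwards [hpos, hfin] with x h0 ht
    rw [ENNReal.mul_rpow_of_nonneg _ _ hm.le, mul_assoc, ← ENNReal.rpow_add _ _ h0 ht,
      add_neg_cancel, ENNReal.rpow_zero, mul_one, ← ENNReal.rpow_mul]
  simp only [hleft]
  rw [← lintegral_congr_ae hright]
  exact hT _ ((hf.pow_const ρ).mul hU)

end Iteration

section Cubes

open Metric

lemma cube_ae_eq_ball (a : Fin n → ℝ) {l : ℝ} (hl : 0 < l) :
    {x | ∀ i, a i ≤ x i ∧ x i < a i + l} =ᵐ[volume] ball (fun i => a i + l / 2) (l / 2) := by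
  have hcube : {x | ∀ i, a i ≤ x i ∧ x i < a i + l} =
      Set.univ.pi fun i => Set.Ico (a i) (a i + l) := by
    ext x
    simp
  have hball : ball (fun i => a i + l / 2) (l / 2) =
      Set.univ.pi fun i => Set.Ioo (a i) (a i + l) := by
    rw [ball_pi _ (half_pos hl)]
    simp only [Real.ball_eq_Ioo, add_sub_cancel_right, add_assoc, add_halves]
  rw [hcube, hball]
  exact Measure.univ_pi_Ico_ae_eq_Icc.trans Measure.univ_pi_Ioo_ae_eq_Icc.symm

lemma IsCube.exists_ae_eq_ball {Q : Set (Fin n → ℝ)} (hQ : IsCube Q) :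
    ∃ c r, 0 < r ∧ Q =ᵐ[volume] ball c r := by
  obtain ⟨a, l, hl, rfl⟩ := hQ
  exact ⟨_, _, half_pos hl, cube_ae_eq_ball a hl⟩

lemma exists_isCube_ae_eq_ball (c : Fin n → ℝ) {r : ℝ} (hr : 0 < r) :
    ∃ Q, IsCube Q ∧ Q =ᵐ[volume] ball c r := by
  have hl : 0 < 2 * r := by positivity
  refine ⟨_, ⟨fun i => c i - r, 2 * r, hl, rfl⟩, ?_⟩
  convert cube_ae_eq_ball (fun i => c i - r) hl using 2
  all_goals simp

lemma iSup_isCube_lt_top_iff {F : Set (Fin n → ℝ) → ℝ≥0∞}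
    (hF : ∀ s t, s =ᵐ[volume] t → F s = F t) :
    (⨆ (Q : Set (Fin n → ℝ)) (_ : IsCube Q), F Q) < ∞ ↔
      ∃ C, C ≠ ∞ ∧ ∀ c r, 0 < r → F (ball c r) ≤ C := by
  constructor
  · refine fun h => ⟨_, h.ne, fun c r hr => ?_⟩
    obtain ⟨Q, hQ, hQc⟩ := exists_isCube_ae_eq_ball c hr
    exact hF _ _ hQc ▸ le_iSup₂ (f := fun Q (_ : IsCube Q) => F Q) Q hQ
  · rintro ⟨C, hC, h⟩
    refine (iSup₂_le fun Q hQ => ?_).trans_lt hC.lt_top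
    obtain ⟨c, r, hr, hQc⟩ := hQ.exists_ae_eq_ball
    exact hF _ _ hQc ▸ h c r hr

lemma eavg_eq_setLAverage (Q : Set (Fin n → ℝ)) (f : (Fin n → ℝ) → ℝ≥0∞) :
    eavg Q f = ⨍⁻ x in Q, f x ∂volume :=
  (setLAverage_eq _ _ _).symm

lemma le_add_one_mul_of_div_le {a b C : ℝ≥0∞} (hC : C ≠ ∞) (h : a / b ≤ C) : a ≤ (C + 1) * b :=
  (ENNReal.div_le_iff_le_mul (Or.inr (by finiteness)) (Or.inr (by simp))).1 (h.trans le_self_add)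

lemma essSup_le_iff_ae_le {α : Type*} [MeasurableSpace α] {μ : Measure α} {f : α → ℝ≥0∞}
    {C : ℝ≥0∞} : essSup f μ ≤ C ↔ ∀ᵐ x ∂μ, f x ≤ C :=
  ⟨fun h => (ENNReal.ae_le_essSup f).mono fun _ hx => hx.trans h, essSup_le_of_ae_le C⟩

end Cubes

section Classes

open Metric

lemma isFiniteMeasure_restrict_ball (c : Fin n → ℝ) (r : ℝ) :
    IsFiniteMeasure (volume.restrict (ball c r)) :=
  isFiniteMeasure_restrict.2 measure_ball_lt_top.ne

lemma neZero_restrict_ball (c : Fin n → ℝ) {r : ℝ} (hr : 0 < r) :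
    NeZero (volume.restrict (ball c r)) :=
  ⟨Measure.restrict_eq_zero.not.2 (measure_ball_pos volume c hr).ne'⟩

variable {w v : (Fin n → ℝ) → ℝ≥0∞} {p q s : ℝ}

lemma memAp_iff (hpq : p.HolderConjugate q) :
    MemAp p w ↔ ∃ C, C ≠ ∞ ∧ ∀ c r, 0 < r →
      (⨍⁻ x in ball c r, w x ∂volume) * (⨍⁻ x in ball c r, w x ^ (1 - q) ∂volume) ^ (p - 1)
        ≤ C := by
  simp only [MemAp, ApConst, if_neg hpq.lt.ne', eavg_eq_setLAverage, ← hpq.conjugate_eq]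
  exact iSup_isCube_lt_top_iff fun s t hst => by rw [setLAverage_congr hst, setLAverage_congr hst]

lemma memAp_one_iff :
    MemAp 1 w ↔ ∃ C, C ≠ ∞ ∧ ∀ c r, 0 < r →
      ∀ᵐ x ∂volume.restrict (ball c r), ⨍⁻ y in ball c r, w y ∂volume ≤ C * w x := by
  simp only [MemAp, ApConst, if_pos, eavg_eq_setLAverage]
  rw [iSup_isCube_lt_top_iff fun s t hst => by
    rw [setLAverage_congr hst, Measure.restrict_congr_set hst]]
  simp only [essSup_le_iff_ae_le]
  constructor
  · rintro ⟨C, hC, h⟩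
    exact ⟨C + 1, by finiteness, fun c r hr => (h c r hr).mono fun x => le_add_one_mul_of_div_le hC⟩
  · rintro ⟨C, hC, h⟩
    exact ⟨C, hC, fun c r hr => (h c r hr).mono fun x => ENNReal.div_le_of_le_mul⟩

lemma memRH_iff (hs : 0 < s) :
    MemRH s w ↔ ∃ C, C ≠ ∞ ∧ ∀ c r, 0 < r →
      ⨍⁻ x in ball c r, w x ^ s ∂volume ≤ (C * ⨍⁻ x in ball c r, w x ∂volume) ^ s := by
  simp only [MemRH, RHConst, eavg_eq_setLAverage, one_div]
  rw [iSup_isCube_lt_top_iff fun s t hst => by rw [setLAverage_congr hst, setLAverage_congr hst]]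
  constructor
  · rintro ⟨C, hC, h⟩
    exact ⟨C + 1, by finiteness, fun c r hr =>
      (ENNReal.rpow_inv_le_iff hs).1 (le_add_one_mul_of_div_le hC (h c r hr))⟩
  · rintro ⟨C, hC, h⟩
    exact ⟨C, hC, fun c r hr =>
      ENNReal.div_le_of_le_mul ((ENNReal.rpow_inv_le_iff hs).2 (h c r hr))⟩

lemma memRHInf_iff :
    MemRHInf w ↔ ∃ C, C ≠ ∞ ∧ ∀ c r, 0 < r →
      ∀ᵐ x ∂volume.restrict (ball c r), w x ≤ C * ⨍⁻ y in ball c r, w y ∂volume := by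
  simp only [MemRHInf, RHInfConst, eavg_eq_setLAverage]
  rw [iSup_isCube_lt_top_iff fun s t hst => by
    rw [setLAverage_congr hst, Measure.restrict_congr_set hst]]
  simp only [essSup_le_iff_ae_le]
  constructor
  · rintro ⟨C, hC, h⟩
    exact ⟨C + 1, by finiteness, fun c r hr => (h c r hr).mono fun x => le_add_one_mul_of_div_le hC⟩
  · rintro ⟨C, hC, h⟩
    exact ⟨C, hC, fun c r hr => (h c r hr).mono fun x => ENNReal.div_le_of_le_mul⟩

lemma isWeight_iff :
    IsWeight w ↔ Measurable w ∧ (∀ᵐ x, 0 < w x ∧ w x < ∞) ∧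
      ∀ c r, 0 < r → ⨍⁻ x in ball c r, w x ∂volume ≠ ∞ := by
  refine and_congr_right fun _ => and_congr_right fun _ => ⟨fun h c r hr => ?_, fun h Q hQ => ?_⟩
  · obtain ⟨Q, hQ, hQc⟩ := exists_isCube_ae_eq_ball c hr
    rw [← setLAverage_congr hQc]
    exact (setLAverage_lt_top (h Q hQ).ne).ne
  · obtain ⟨c, r, hr, hQc⟩ := hQ.exists_ae_eq_ball
    rw [setLIntegral_congr hQc, ← measure_mul_setLAverage _ measure_ball_lt_top.ne]
    exact ENNReal.mul_lt_top measure_ball_lt_top (h c r hr).lt_top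

namespace IsWeight

lemma measurable (hw : IsWeight w) : Measurable w := hw.1

lemma ae_ne_zero (hw : IsWeight w) : ∀ᵐ x, w x ≠ 0 := hw.2.1.mono fun _ hx => hx.1.ne'

lemma ae_ne_top (hw : IsWeight w) : ∀ᵐ x, w x ≠ ∞ := hw.2.1.mono fun _ hx => hx.2.ne

lemma ae_rpow_ne_zero (hw : IsWeight w) (a : ℝ) : ∀ᵐ x, w x ^ a ≠ 0 := by
  filter_upwards [hw.ae_ne_zero, hw.ae_ne_top] with x h0 ht using
    (ENNReal.rpow_pos (pos_iff_ne_zero.2 h0) ht).ne'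

lemma ae_rpow_ne_top (hw : IsWeight w) (a : ℝ) : ∀ᵐ x, w x ^ a ≠ ∞ := by
  filter_upwards [hw.ae_ne_zero, hw.ae_ne_top] with x h0 ht using
    ENNReal.rpow_ne_top_of_ne_zero h0 ht

lemma setLAverage_ball_ne_top (hw : IsWeight w) (c : Fin n → ℝ) {r : ℝ} (hr : 0 < r) :
    ⨍⁻ x in ball c r, w x ∂volume ≠ ∞ :=
  (isWeight_iff.1 hw).2.2 c r hr

lemma setLAverage_ball_ne_zero (hw : IsWeight w) (c : Fin n → ℝ) {r : ℝ} (hr : 0 < r) :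
    ⨍⁻ x in ball c r, w x ∂volume ≠ 0 := by
  have := isFiniteMeasure_restrict_ball c r
  have := neZero_restrict_ball c hr
  exact laverage_ne_zero hw.measurable.aemeasurable (ae_restrict_of_ae hw.ae_ne_zero)

lemma one_le_setLAverage_ball_mul_rpow (hw : IsWeight w) (hpq : p.HolderConjugate q)
    (c : Fin n → ℝ) {r : ℝ} (hr : 0 < r) :
    1 ≤ (⨍⁻ x in ball c r, w x ∂volume) * (⨍⁻ x in ball c r, w x ^ (1 - q) ∂volume) ^ (p - 1) := by
  have := isFiniteMeasure_restrict_ball c r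
  have := neZero_restrict_ball c hr
  exact one_le_laverage_mul_rpow hpq hw.measurable.aemeasurable
    (ae_restrict_of_ae hw.ae_ne_zero) (ae_restrict_of_ae hw.ae_ne_top)

lemma congr (hw : IsWeight w) (hv : Measurable v) (h : w =ᵐ[volume] v) : IsWeight v := by
  refine ⟨hv, ?_, fun Q hQ => ?_⟩
  · filter_upwards [hw.2.1, h] with x hx hwv using hwv ▸ hx
  · rw [← lintegral_congr_ae (ae_restrict_of_ae h)]
    exact hw.2.2 Q hQ

end IsWeight

lemma eavg_congr_ae (Q : Set (Fin n → ℝ)) (h : w =ᵐ[volume] v) : eavg Q w = eavg Q v := by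
  rw [eavg, eavg, lintegral_congr_ae (ae_restrict_of_ae h)]

lemma MemAp.congr (hw : MemAp p w) (h : w =ᵐ[volume] v) : MemAp p v := by
  have hconst : ApConst p v = ApConst p w := by
    unfold ApConst
    split_ifs
    · refine iSup_congr fun Q => iSup_congr fun _ => essSup_congr_ae (ae_restrict_of_ae ?_)
      filter_upwards [h] with x hx
      rw [hx, eavg_congr_ae Q h]
    · refine iSup_congr fun Q => iSup_congr fun _ => ?_
      rw [eavg_congr_ae Q h, eavg_congr_ae Q (h.mono fun x hx => congrArg (· ^ _) hx)]
  rwa [MemAp, hconst]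

lemma MemRH.congr (hw : MemRH s w) (h : w =ᵐ[volume] v) : MemRH s v := by
  have hconst : RHConst s v = RHConst s w := iSup_congr fun Q => iSup_congr fun _ => by
    rw [eavg_congr_ae Q h, eavg_congr_ae Q (h.mono fun x hx => congrArg (· ^ _) hx)]
  rwa [MemRH, hconst]

lemma MemRHInf.congr (hw : MemRHInf w) (h : w =ᵐ[volume] v) : MemRHInf v := by
  have hconst : RHInfConst v = RHInfConst w := by
    refine iSup_congr fun Q => iSup_congr fun _ => essSup_congr_ae (ae_restrict_of_ae ?_)
    filter_upwards [h] with x hx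
    rw [hx, eavg_congr_ae Q h]
  rwa [MemRHInf, hconst]

end Classes

section Muckenhoupt

open Metric

variable {w : (Fin n → ℝ) → ℝ≥0∞} {p q : ℝ}

lemma rpow_one_sub_rpow_one_sub (hpq : p.HolderConjugate q) (a : ℝ≥0∞) :
    (a ^ (1 - q)) ^ (1 - p) = a := by
  rw [← ENNReal.rpow_mul, show (1 - q) * (1 - p) = 1 by linear_combination hpq.mul_eq_add,
    ENNReal.rpow_one]

lemma rpow_sub_one_mul_rpow_one_sub {a : ℝ≥0∞} (h0 : a ≠ 0) (ht : a ≠ ∞) :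
    a ^ (p - 1) * a ^ (1 - p) = 1 := by
  rw [← ENNReal.rpow_add _ _ h0 ht, sub_add_sub_cancel, sub_self, ENNReal.rpow_zero]

lemma mul_rpow_one_sub_rpow_sub_one (hpq : p.HolderConjugate q) {a : ℝ≥0∞} (h0 : a ≠ 0)
    (ht : a ≠ ∞) : a * (a ^ (1 - q)) ^ (p - 1) = 1 := by
  rw [← ENNReal.rpow_mul, show (1 - q) * (p - 1) = -1 by linear_combination -hpq.mul_eq_add,
    ENNReal.rpow_neg_one, ENNReal.mul_inv_cancel h0 ht]

lemma div_rpow_mul_self {a b : ℝ≥0∞} (h0 : b ≠ 0) (ht : b ≠ ∞) (hp : 0 ≤ p) :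
    (a / b) ^ p * b = a ^ p * b ^ (1 - p) := by
  rw [ENNReal.div_rpow_of_nonneg _ _ hp, div_eq_mul_inv, ← ENNReal.rpow_neg, mul_assoc,
    sub_eq_neg_add, ENNReal.rpow_add _ _ h0 ht, ENNReal.rpow_one]

lemma MemAp.isWeight_rpow_one_sub (h : MemAp p w) (hpq : p.HolderConjugate q) (hw : IsWeight w) :
    IsWeight fun x => w x ^ (1 - q) := by
  obtain ⟨C, hC, hAp⟩ := (memAp_iff hpq).1 h
  refine isWeight_iff.2 ⟨hw.measurable.pow_const _, ?_, fun c r hr htop => ?_⟩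
  · filter_upwards [hw.ae_rpow_ne_zero (1 - q), hw.ae_rpow_ne_top (1 - q)] with x h0 ht using
      ⟨pos_iff_ne_zero.2 h0, ht.lt_top⟩
  · have hle := hAp c r hr
    rw [htop, ENNReal.top_rpow_of_pos hpq.sub_one_pos,
      ENNReal.mul_top (hw.setLAverage_ball_ne_zero c hr), top_le_iff] at hle
    exact hC hle

lemma MemAp.rpow_one_sub (h : MemAp p w) (hpq : p.HolderConjugate q) :
    MemAp q fun x => w x ^ (1 - q) := by
  obtain ⟨C, hC, hAp⟩ := (memAp_iff hpq).1 h
  have hq := hpq.symm.sub_one_pos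
  refine (memAp_iff hpq.symm).2 ⟨C ^ (q - 1), by finiteness, fun c r hr => ?_⟩
  simp only [rpow_one_sub_rpow_one_sub hpq]
  calc (⨍⁻ x in ball c r, w x ^ (1 - q) ∂volume) * (⨍⁻ x in ball c r, w x ∂volume) ^ (q - 1)
      = ((⨍⁻ x in ball c r, w x ∂volume) *
          (⨍⁻ x in ball c r, w x ^ (1 - q) ∂volume) ^ (p - 1)) ^ (q - 1) := by
        rw [ENNReal.mul_rpow_of_nonneg _ _ hq.le, ← ENNReal.rpow_mul,
          show (p - 1) * (q - 1) = 1 by linear_combination hpq.mul_eq_add, ENNReal.rpow_one,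
          mul_comm]
    _ ≤ C ^ (q - 1) := ENNReal.rpow_le_rpow (hAp c r hr) hq.le

lemma volume_ball_five_mul (c : Fin n → ℝ) {r : ℝ} (hr : 0 < r) :
    volume (ball c (5 * r)) = 5 ^ n * volume (ball c r) := by
  rw [Real.volume_pi_ball c (by positivity), Real.volume_pi_ball c hr, mul_left_comm, mul_pow,
    ENNReal.ofReal_mul (by positivity), ENNReal.ofReal_pow (by positivity), Fintype.card_fin]
  norm_num

lemma setLAverage_ball_le_five_pow_mul (f : (Fin n → ℝ) → ℝ≥0∞) (c : Fin n → ℝ) {r : ℝ}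
    (hr : 0 < r) :
    ⨍⁻ x in ball c r, f x ∂volume ≤ 5 ^ n * ⨍⁻ x in ball c (5 * r), f x ∂volume := by
  have hsub : ball c r ⊆ ball c (5 * r) := ball_subset_ball (by linarith)
  rw [setLAverage_eq, setLAverage_eq, volume_ball_five_mul c hr, ← mul_div_assoc,
    ENNReal.mul_div_mul_left _ _ (by positivity) (by finiteness)]
  exact ENNReal.div_le_div_right (lintegral_mono_set hsub) _

lemma IsWeight.setLAverage_ball_five_mul_le (hw : IsWeight w) (hpq : p.HolderConjugate q)
    {C : ℝ≥0∞} {c : Fin n → ℝ} {r : ℝ} (hr : 0 < r)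
    (hC : (⨍⁻ x in ball c (5 * r), w x ∂volume) *
      (⨍⁻ x in ball c (5 * r), w x ^ (1 - q) ∂volume) ^ (p - 1) ≤ C) :
    ⨍⁻ x in ball c (5 * r), w x ∂volume ≤
      (5 ^ n) ^ (p - 1) * C * ⨍⁻ x in ball c r, w x ∂volume := by
  have hp := hpq.sub_one_pos.le
  set σ := fun x => w x ^ (1 - q)
  calc ⨍⁻ x in ball c (5 * r), w x ∂volume
      ≤ (⨍⁻ x in ball c (5 * r), w x ∂volume) *
          ((⨍⁻ x in ball c r, w x ∂volume) * (⨍⁻ x in ball c r, σ x ∂volume) ^ (p - 1)) :=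
        le_mul_of_one_le_right' (hw.one_le_setLAverage_ball_mul_rpow hpq c hr)
    _ ≤ (⨍⁻ x in ball c (5 * r), w x ∂volume) * ((⨍⁻ x in ball c r, w x ∂volume) *
          (5 ^ n * ⨍⁻ x in ball c (5 * r), σ x ∂volume) ^ (p - 1)) := by
        gcongr
        exact setLAverage_ball_le_five_pow_mul σ c hr
    _ = (5 ^ n) ^ (p - 1) * ((⨍⁻ x in ball c (5 * r), w x ∂volume) *
          (⨍⁻ x in ball c (5 * r), σ x ∂volume) ^ (p - 1)) * ⨍⁻ x in ball c r, w x ∂volume := by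
        rw [ENNReal.mul_rpow_of_nonneg _ _ hp]
        ring
    _ ≤ _ := by gcongr

lemma MemAp.exists_withDensity_ball_five_mul_le (h : MemAp p w) (hpq : p.HolderConjugate q)
    (hw : IsWeight w) : ∃ D, D ≠ ∞ ∧ ∀ c r,
      volume.withDensity w (ball c (5 * r)) ≤ D * volume.withDensity w (ball c r) := by
  obtain ⟨C, hC, hAp⟩ := (memAp_iff hpq).1 h
  have := hpq.sub_one_pos
  refine ⟨5 ^ n * ((5 ^ n) ^ (p - 1) * C), by finiteness, fun c r => ?_⟩
  obtain hr | hr := le_or_gt r 0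
  · rw [ball_eq_empty.2 (by linarith), measure_empty]
    exact zero_le
  rw [withDensity_apply _ measurableSet_ball, withDensity_apply _ measurableSet_ball,
    ← measure_mul_setLAverage _ measure_ball_lt_top.ne,
    ← measure_mul_setLAverage _ measure_ball_lt_top.ne, volume_ball_five_mul c hr]
  calc 5 ^ n * volume (ball c r) * ⨍⁻ x in ball c (5 * r), w x ∂volume
      ≤ 5 ^ n * volume (ball c r) *
          ((5 ^ n) ^ (p - 1) * C * ⨍⁻ x in ball c r, w x ∂volume) := by
        gcongr
        exact hw.setLAverage_ball_five_mul_le hpq hr (hAp c (5 * r) (by positivity))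
    _ = _ := by ring

lemma MemAp.exists_lintegral_maximalFunction_withDensity_rpow_mul_le (h : MemAp p w)
    (hpq : p.HolderConjugate q) (hw : IsWeight w) {a : ℝ} (ha : 1 < a) :
    ∃ C, C ≠ ∞ ∧ ∀ f, Measurable f →
      ∫⁻ x, maximalFunction (volume.withDensity w) f x ^ a * w x ≤ C * ∫⁻ x, f x ^ a * w x := by
  obtain ⟨D, hD, hdoubling⟩ := h.exists_withDensity_ball_five_mul_le hpq hw
  refine ⟨2 ^ a * ENNReal.ofReal (a / (a - 1)) * D, by finiteness, fun f hf => ?_⟩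
  have hstrong := lintegral_maximalFunction_rpow_le hdoubling hD hf ha
  rw [lintegral_withDensity_eq_lintegral_mul _ hw.measurable
      (measurable_maximalFunction.pow_const a),
    lintegral_withDensity_eq_lintegral_mul _ hw.measurable (hf.pow_const a)] at hstrong
  simpa only [Pi.mul_apply, mul_comm (w _)] using hstrong

lemma IsWeight.setLAverage_ball_withDensity_div (hw : IsWeight w) {f : (Fin n → ℝ) → ℝ≥0∞}
    (hf : Measurable f) (c : Fin n → ℝ) {r : ℝ} (hr : 0 < r) :
    ⨍⁻ x in ball c r, f x / w x ∂volume.withDensity w =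
      (⨍⁻ x in ball c r, f x ∂volume) / ⨍⁻ x in ball c r, w x ∂volume :=
  setLAverage_withDensity_div hw.measurable hf hw.ae_ne_zero hw.ae_ne_top measurableSet_ball
    (measure_ball_pos volume c hr).ne' measure_ball_lt_top.ne

lemma IsWeight.setLAverage_ball_div_rpow_le (hw : IsWeight w) {f : (Fin n → ℝ) → ℝ≥0∞}
    (hf : Measurable f) {a : ℝ} (ha : 0 ≤ a) (c : Fin n → ℝ) {r : ℝ} (hr : 0 < r) :
    ((⨍⁻ x in ball c r, f x ∂volume) / ⨍⁻ x in ball c r, w x ∂volume) ^ a ≤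
      ⨍⁻ x in ball c r,
        maximalFunction (volume.withDensity w) (fun y => f y / w y) x ^ a ∂volume := by
  rw [← hw.setLAverage_ball_withDensity_div hf c hr,
    setLAverage_eq _ (fun x => maximalFunction _ _ x ^ a),
    ENNReal.le_div_iff_mul_le (Or.inl (measure_ball_pos volume c hr).ne')
      (Or.inl measure_ball_lt_top.ne), ← setLIntegral_const]
  exact setLIntegral_mono (measurable_maximalFunction.pow_const a) fun x hx =>
    ENNReal.rpow_le_rpow (setLAverage_le_maximalFunction hx) ha

/-- Lerner's pointwise bound: it reduces Muckenhoupt's theorem to the maximal theorem for the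
doubling measures `w dx` and `w ^ (1 - q) dx`. -/
lemma IsWeight.maximalFunction_rpow_le (hw : IsWeight w) (hσ : IsWeight fun x => w x ^ (1 - q))
    (hp : 1 < p) {C : ℝ≥0∞} (hC : ∀ c r, 0 < r → (⨍⁻ x in ball c r, w x ∂volume) *
      (⨍⁻ x in ball c r, w x ^ (1 - q) ∂volume) ^ (p - 1) ≤ C)
    {f : (Fin n → ℝ) → ℝ≥0∞} (hf : Measurable f) (x : Fin n → ℝ) :
    maximalFunction volume f x ^ (p - 1) ≤ C * maximalFunction (volume.withDensity w)
      (fun y => maximalFunction (volume.withDensity fun z => w z ^ (1 - q))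
        (fun z => f z / w z ^ (1 - q)) y ^ (p - 1) / w y) x := by
  have hp₁ : 0 < p - 1 := sub_pos.2 hp
  set σ := fun x => w x ^ (1 - q)
  set N := maximalFunction (volume.withDensity σ) fun z => f z / σ z
  rw [← ENNReal.le_rpow_inv_iff hp₁]
  refine maximalFunction_le fun c r hx => (ENNReal.le_rpow_inv_iff hp₁).2 ?_
  have hr : 0 < r := pos_of_mem_ball hx
  set a := ⨍⁻ y in ball c r, w y ∂volume
  set b := ⨍⁻ y in ball c r, σ y ∂volume
  calc (⨍⁻ y in ball c r, f y ∂volume) ^ (p - 1)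
      = b ^ (p - 1) * ((⨍⁻ y in ball c r, f y ∂volume) / b) ^ (p - 1) := by
        rw [← ENNReal.mul_rpow_of_nonneg _ _ hp₁.le, ENNReal.mul_div_cancel
          (hσ.setLAverage_ball_ne_zero c hr) (hσ.setLAverage_ball_ne_top c hr)]
    _ ≤ b ^ (p - 1) * ⨍⁻ y in ball c r, N y ^ (p - 1) ∂volume := by
        gcongr
        exact hσ.setLAverage_ball_div_rpow_le hf hp₁.le c hr
    _ = a * b ^ (p - 1) * ((⨍⁻ y in ball c r, N y ^ (p - 1) ∂volume) / a) := by
        rw [mul_comm a, mul_assoc, ENNReal.mul_div_cancel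
          (hw.setLAverage_ball_ne_zero c hr) (hw.setLAverage_ball_ne_top c hr)]
    _ = a * b ^ (p - 1) * ⨍⁻ y in ball c r, N y ^ (p - 1) / w y ∂volume.withDensity w := by
        rw [hw.setLAverage_ball_withDensity_div (measurable_maximalFunction.pow_const _) c hr]
    _ ≤ _ := mul_le_mul' (hC c r hr) (setLAverage_le_maximalFunction hx)

theorem MemAp.exists_lintegral_maximalFunction_rpow_mul_le (h : MemAp p w)
    (hpq : p.HolderConjugate q) (hw : IsWeight w) :
    ∃ C, C ≠ ∞ ∧ ∀ f, Measurable f →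
      ∫⁻ x, maximalFunction volume f x ^ p * w x ≤ C * ∫⁻ x, f x ^ p * w x := by
  obtain ⟨K, hK, hAp⟩ := (memAp_iff hpq).1 h
  have hσ := h.isWeight_rpow_one_sub hpq hw
  obtain ⟨C₁, hC₁, hMw⟩ :=
    h.exists_lintegral_maximalFunction_withDensity_rpow_mul_le hpq hw hpq.symm.lt
  obtain ⟨C₂, hC₂, hMσ⟩ := (h.rpow_one_sub hpq)
    |>.exists_lintegral_maximalFunction_withDensity_rpow_mul_le hpq.symm hσ hpq.lt
  have hq := hpq.symm.pos.le
  refine ⟨K ^ q * (C₁ * C₂), by finiteness, fun f hf => ?_⟩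
  set σ := fun x => w x ^ (1 - q)
  set N := maximalFunction (volume.withDensity σ) fun z => f z / σ z
  have hpow : ∀ t : ℝ≥0∞, (t ^ (p - 1)) ^ q = t ^ p := fun t => by
    rw [← ENNReal.rpow_mul, hpq.sub_one_mul_conj]
  calc ∫⁻ x, maximalFunction volume f x ^ p * w x
      ≤ ∫⁻ x, K ^ q * (maximalFunction (volume.withDensity w)
          (fun y => N y ^ (p - 1) / w y) x ^ q * w x) := by
        refine lintegral_mono fun x => ?_
        rw [← hpow, ← mul_assoc, ← ENNReal.mul_rpow_of_nonneg _ _ hq]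
        gcongr
        exact hw.maximalFunction_rpow_le hσ hpq.lt hAp hf x
    _ ≤ K ^ q * (C₁ * ∫⁻ x, (N x ^ (p - 1) / w x) ^ q * w x) := by
        rw [lintegral_const_mul' _ _ (by finiteness)]
        gcongr
        exact hMw _ ((measurable_maximalFunction.pow_const _).div hw.measurable)
    _ = K ^ q * (C₁ * ∫⁻ x, N x ^ p * σ x) := by
        congr 2
        refine lintegral_congr_ae ?_
        filter_upwards [hw.ae_ne_zero, hw.ae_ne_top] with x h0 ht
        rw [div_rpow_mul_self h0 ht hq, hpow]
    _ ≤ K ^ q * (C₁ * (C₂ * ∫⁻ x, (f x / σ x) ^ p * σ x)) := by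
        gcongr
        exact hMσ _ (hf.div hσ.measurable)
    _ = K ^ q * (C₁ * C₂) * ∫⁻ x, f x ^ p * w x := by
        rw [mul_assoc, mul_assoc]
        congr 3
        refine lintegral_congr_ae ?_
        filter_upwards [hσ.ae_ne_zero, hσ.ae_ne_top] with x h0 ht
        rw [div_rpow_mul_self h0 ht hpq.pos.le, rpow_one_sub_rpow_one_sub hpq]

end Muckenhoupt

section Jones

open Metric

namespace IsMonotoneContinuous

variable {α : Type*} [MeasurableSpace α] {μ : Measure α} {S T : (α → ℝ≥0∞) → α → ℝ≥0∞}

lemma exists_ae_ne_zero_le_const_mul [SigmaFinite μ] (hT : IsMonotoneContinuous T) {p : ℝ}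
    (hp : 0 < p) {C : ℝ≥0∞} (hC : C ≠ ∞)
    (hTC : ∀ g, Measurable g → ∫⁻ x, T g x ^ p ∂μ ≤ C * ∫⁻ x, g x ^ p ∂μ) :
    ∃ η, Measurable η ∧ (∀ᵐ x ∂μ, η x ≠ 0) ∧ (∀ᵐ x ∂μ, η x ≠ ∞) ∧
      ∃ A : ℝ≥0∞, A ≠ ∞ ∧ ∀ x, T η x ≤ A * η x := by
  obtain ⟨g, hgpos, hg, hgint⟩ := exists_pos_lintegral_lt_of_sigmaFinite μ one_ne_zero
  obtain ⟨η, hη, hgη, hηint, hTη⟩ := hT.exists_le_const_mul (μ := μ) hp hC hTC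
    (hg.coe_nnreal_ennreal.pow_const p⁻¹)
    (by simpa only [ENNReal.rpow_inv_rpow hp.ne'] using (hgint.trans one_lt_top).ne)
  refine ⟨η, hη, ae_of_all _ fun x => ne_bot_of_le_ne_bot ?_ (hgη x), ?_, hTη⟩
  · exact (ENNReal.rpow_pos (ENNReal.coe_pos.2 (hgpos x)) ENNReal.coe_ne_top).ne'
  · filter_upwards [ae_lt_top (hη.pow_const p) hηint] with x hx htop
    simp [htop, hp] at hx

lemma exists_ae_ne_zero_le_const_mul₂ [SigmaFinite μ] (hS : IsMonotoneContinuous S)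
    (hT : IsMonotoneContinuous T) {p : ℝ} (hp : 0 < p) {C₁ C₂ : ℝ≥0∞} (hC₁ : C₁ ≠ ∞)
    (hC₂ : C₂ ≠ ∞) (hSC : ∀ g, Measurable g → ∫⁻ x, S g x ^ p ∂μ ≤ C₁ * ∫⁻ x, g x ^ p ∂μ)
    (hTC : ∀ g, Measurable g → ∫⁻ x, T g x ^ p ∂μ ≤ C₂ * ∫⁻ x, g x ^ p ∂μ) :
    ∃ η, Measurable η ∧ (∀ᵐ x ∂μ, η x ≠ 0) ∧ (∀ᵐ x ∂μ, η x ≠ ∞) ∧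
      ∃ A : ℝ≥0∞, A ≠ ∞ ∧ (∀ x, S η x ≤ A * η x) ∧ ∀ x, T η x ≤ A * η x := by
  obtain ⟨η, hη, h0, ht, A, hA, hle⟩ := (hS.sup hT).exists_ae_ne_zero_le_const_mul (μ := μ) hp
    (C := C₁ + C₂) (by finiteness) fun g hg => by
      calc ∫⁻ x, (S g x ⊔ T g x) ^ p ∂μ ≤ ∫⁻ x, S g x ^ p ∂μ + ∫⁻ x, T g x ^ p ∂μ := by
            simpa using
              lintegral_sup_const_mul_rpow_le (hS.measurable hg) (hT.measurable hg) hp 1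
        _ ≤ (C₁ + C₂) * ∫⁻ x, g x ^ p ∂μ := by
            rw [add_mul]
            exact add_le_add (hSC g hg) (hTC g hg)
  exact ⟨η, hη, h0, ht, A, hA, fun x => le_sup_left.trans (hle x),
    fun x => le_sup_right.trans (hle x)⟩

end IsMonotoneContinuous

lemma le_mul_of_powConj_le {α : Type*} {T : (α → ℝ≥0∞) → α → ℝ≥0∞} {U f : α → ℝ≥0∞} {ρ : ℝ}
    (hρ : 0 < ρ) {A : ℝ≥0∞} {x : α} (h0 : U x ≠ 0) (ht : U x ≠ ∞)
    (h : powConj ρ U T f x ≤ A * f x) :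
    T (fun y => f y ^ ρ * U y) x ≤ A ^ ρ * (f x ^ ρ * U x) := by
  rw [powConj, ENNReal.rpow_inv_le_iff hρ, ENNReal.mul_rpow_of_nonneg _ _ hρ.le,
    ENNReal.div_le_iff h0 ht] at h
  rwa [← mul_assoc]

variable {w u : (Fin n → ℝ) → ℝ≥0∞} {p q : ℝ} {A : ℝ≥0∞}

lemma memAp_one_of_maximalFunction_le (hA : A ≠ ∞)
    (h : ∀ᵐ x, maximalFunction volume u x ≤ A * u x) : MemAp 1 u := by
  refine memAp_one_iff.2 ⟨A, hA, fun c r _ => ?_⟩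
  filter_upwards [ae_restrict_of_ae h, ae_restrict_mem measurableSet_ball] with x hMx hx
  exact (setLAverage_le_maximalFunction hx).trans hMx

lemma isWeight_of_maximalFunction_le (hu : Measurable u) (h0 : ∀ᵐ x, u x ≠ 0)
    (ht : ∀ᵐ x, u x ≠ ∞) (hA : A ≠ ∞) (h : ∀ᵐ x, maximalFunction volume u x ≤ A * u x) :
    IsWeight u := by
  refine isWeight_iff.2 ⟨hu, ?_, fun c r hr => ?_⟩
  · filter_upwards [h0, ht] with x h0 ht using ⟨pos_iff_ne_zero.2 h0, ht.lt_top⟩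
  · have := neZero_restrict_ball c hr
    obtain ⟨x, ⟨hx, hMx⟩, hux⟩ := ((ae_restrict_mem measurableSet_ball).and
      (ae_restrict_of_ae (s := ball c r) h) |>.and (ae_restrict_of_ae ht)).exists
    exact ne_top_of_le_ne_top (ENNReal.mul_ne_top hA hux)
      ((setLAverage_le_maximalFunction hx).trans hMx)

lemma isWeight_and_memAp_one_of_powConj_le {ρ : ℝ} (hρ : 0 < ρ) {U η : (Fin n → ℝ) → ℝ≥0∞}
    (hU : Measurable U) (hU₀ : ∀ᵐ x, U x ≠ 0) (hU_top : ∀ᵐ x, U x ≠ ∞) (hη : Measurable η)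
    (hη₀ : ∀ᵐ x, η x ≠ 0) (hη_top : ∀ᵐ x, η x ≠ ∞) (hA : A ≠ ∞)
    (h : ∀ x, powConj ρ U (maximalFunction volume) η x ≤ A * η x) :
    IsWeight (fun x => η x ^ ρ * U x) ∧ MemAp 1 (fun x => η x ^ ρ * U x) := by
  have hM : ∀ᵐ x, maximalFunction volume (fun y => η y ^ ρ * U y) x ≤ A ^ ρ * (η x ^ ρ * U x) := by
    filter_upwards [hU₀, hU_top] with x h0 ht using le_mul_of_powConj_le hρ h0 ht (h x)
  have hAρ : A ^ ρ ≠ ∞ := by finiteness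
  refine ⟨isWeight_of_maximalFunction_le ((hη.pow_const ρ).mul hU) ?_ ?_ hAρ hM,
    memAp_one_of_maximalFunction_le hAρ hM⟩
  · filter_upwards [hU₀, hη₀, hη_top] with x hU₀ hη₀ hη_top
    exact mul_ne_zero (ENNReal.rpow_pos (pos_iff_ne_zero.2 hη₀) hη_top).ne' hU₀
  · filter_upwards [hU_top, hη_top] with x hU_top hη_top
    finiteness

/-- Muckenhoupt's theorem for the dual weight makes the first operator bounded on `L^p`, and for
`w` itself the second one. -/
lemma MemAp.exists_powConj_maximalFunction_le (h : MemAp p w) (hpq : p.HolderConjugate q)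
    (hw : IsWeight w) :
    ∃ η, Measurable η ∧ (∀ᵐ x, η x ≠ 0) ∧ (∀ᵐ x, η x ≠ ∞) ∧ ∃ A : ℝ≥0∞, A ≠ ∞ ∧
      (∀ x, powConj (p - 1) (fun y => w y ^ p⁻¹) (maximalFunction volume) η x ≤ A * η x) ∧
      ∀ x, powConj 1 (fun y => w y ^ (-p⁻¹)) (maximalFunction volume) η x ≤ A * η x := by
  have hp := hpq.pos
  have hp₁ := hpq.sub_one_pos
  obtain ⟨C₁, hC₁, hMσ⟩ := (h.rpow_one_sub hpq).exists_lintegral_maximalFunction_rpow_mul_le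
    hpq.symm (h.isWeight_rpow_one_sub hpq hw)
  obtain ⟨C₂, hC₂, hMw⟩ := h.exists_lintegral_maximalFunction_rpow_mul_le hpq hw
  have hσ : ∀ x, (w x ^ p⁻¹) ^ (-q) = w x ^ (1 - q) := fun x => by
    rw [← ENNReal.rpow_mul]
    congr 1
    field_simp
    linear_combination hpq.mul_eq_add
  have hw' : ∀ x, (w x ^ (-p⁻¹)) ^ (-p) = w x := fun x => by
    rw [← ENNReal.rpow_mul, neg_mul_neg, inv_mul_cancel₀ hp.ne', ENNReal.rpow_one]
  have hU := hw.measurable.pow_const p⁻¹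
  have hV := hw.measurable.pow_const (-p⁻¹)
  refine (isMonotoneContinuous_maximalFunction.powConj hp₁ hU).exists_ae_ne_zero_le_const_mul₂
    (isMonotoneContinuous_maximalFunction.powConj one_pos hV) hp hC₁ hC₂
    (fun g hg => ?_) (fun g hg => ?_)
  · simpa only [hpq.sub_one_mul_conj] using lintegral_powConj_rpow_le (m := q) hU
      (hw.ae_rpow_ne_zero _) (hw.ae_rpow_ne_top _) hp₁ hpq.symm.pos
      (by simpa only [hσ] using hMσ) hg
  · simpa only [one_mul] using lintegral_powConj_rpow_le (m := p) hV
      (hw.ae_rpow_ne_zero _) (hw.ae_rpow_ne_top _) one_pos hp (by simpa only [hw'] using hMw) hg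

theorem MemAp.exists_ae_eq_mul_rpow (h : MemAp p w) (hpq : p.HolderConjugate q)
    (hw : IsWeight w) :
    ∃ u₁ u₂ : (Fin n → ℝ) → ℝ≥0∞, (IsWeight u₁ ∧ MemAp 1 u₁) ∧ (IsWeight u₂ ∧ MemAp 1 u₂) ∧
      ∀ᵐ x, w x = u₁ x * u₂ x ^ (1 - p) := by
  obtain ⟨η, hη, hη₀, hη_top, A, hA, hηU, hηV⟩ := h.exists_powConj_maximalFunction_le hpq hw
  refine ⟨_, _,
    isWeight_and_memAp_one_of_powConj_le hpq.sub_one_pos (hw.measurable.pow_const _)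
      (hw.ae_rpow_ne_zero _) (hw.ae_rpow_ne_top _) hη hη₀ hη_top hA hηU,
    isWeight_and_memAp_one_of_powConj_le one_pos (hw.measurable.pow_const _)
      (hw.ae_rpow_ne_zero _) (hw.ae_rpow_ne_top _) hη hη₀ hη_top hA hηV, ?_⟩
  filter_upwards [hw.ae_ne_zero, hw.ae_ne_top, hη₀, hη_top] with x hw₀ hw_top hη₀ hη_top
  have hww : w x ^ p⁻¹ * (w x ^ (-p⁻¹)) ^ (1 - p) = w x := by
    rw [← ENNReal.rpow_mul, ← ENNReal.rpow_add _ _ hw₀ hw_top,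
      show p⁻¹ + -p⁻¹ * (1 - p) = 1 by linear_combination mul_inv_cancel₀ hpq.ne_zero,
      ENNReal.rpow_one]
  rw [ENNReal.rpow_one, ENNReal.mul_rpow_of_ne_top hη_top
    (ENNReal.rpow_ne_top_of_ne_zero hw₀ hw_top), mul_mul_mul_comm,
    rpow_sub_one_mul_rpow_one_sub hη₀ hη_top, one_mul, hww]

end Jones

section Factors

open Metric

variable {u w v : (Fin n → ℝ) → ℝ≥0∞} {p q s a : ℝ}

lemma MemAp.exists_rpow_le (h : MemAp 1 u) (hu : IsWeight u) (ha : a ≤ 0) :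
    ∃ C, C ≠ ∞ ∧ ∀ c r, 0 < r →
      ∀ᵐ x ∂volume.restrict (ball c r), u x ^ a ≤ C * (⨍⁻ y in ball c r, u y ∂volume) ^ a := by
  obtain ⟨A, hA, hA₁⟩ := memAp_one_iff.1 h
  have ha' : 0 ≤ -a := neg_nonneg.2 ha
  refine ⟨A ^ (-a), by finiteness, fun c r hr => (hA₁ c r hr).mono fun x hx => ?_⟩
  have h0 := hu.setLAverage_ball_ne_zero c hr
  have ht := hu.setLAverage_ball_ne_top c hr
  have hinv : (u x)⁻¹ ≤ A * (⨍⁻ y in ball c r, u y ∂volume)⁻¹ := by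
    rw [← div_eq_mul_inv, ENNReal.le_div_iff_mul_le (Or.inl h0) (Or.inl ht), mul_comm,
      ← div_eq_mul_inv]
    exact ENNReal.div_le_of_le_mul hx
  have hneg : ∀ b : ℝ≥0∞, b ^ a = b⁻¹ ^ (-a) := fun b => by
    rw [ENNReal.inv_rpow, ENNReal.rpow_neg, inv_inv]
  rw [hneg, hneg, ← ENNReal.mul_rpow_of_nonneg _ _ ha']
  exact ENNReal.rpow_le_rpow hinv ha'

lemma MemAp.of_one (h : MemAp 1 u) (hu : IsWeight u) (hpq : p.HolderConjugate q) : MemAp p u := by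
  have hp := hpq.sub_one_pos.le
  obtain ⟨C, hC, hle⟩ := h.exists_rpow_le hu (sub_nonpos.2 hpq.symm.lt.le)
  refine (memAp_iff hpq).2 ⟨C ^ (p - 1), by finiteness, fun c r hr => ?_⟩
  have h0 := hu.setLAverage_ball_ne_zero c hr
  have ht := hu.setLAverage_ball_ne_top c hr
  set m := ⨍⁻ x in ball c r, u x ∂volume
  calc m * (⨍⁻ x in ball c r, u x ^ (1 - q) ∂volume) ^ (p - 1)
      ≤ m * (C * m ^ (1 - q)) ^ (p - 1) := by
        gcongr
        exact (laverage_mono_ae (hle c r hr)).trans (setLAverage_const_le _ _)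
    _ = C ^ (p - 1) := by
        rw [ENNReal.mul_rpow_of_nonneg _ _ hp, mul_left_comm,
          mul_rpow_one_sub_rpow_sub_one hpq h0 ht, mul_one]

lemma MemAp.memRHInf_rpow_one_sub (h : MemAp 1 u) (hu : IsWeight u) (hpq : p.HolderConjugate q) :
    MemRHInf fun x => u x ^ (1 - p) := by
  obtain ⟨C, hC, hle⟩ := h.exists_rpow_le hu (sub_nonpos.2 hpq.lt.le)
  refine memRHInf_iff.2 ⟨C, hC, fun c r hr => ?_⟩
  have h0 := hu.setLAverage_ball_ne_zero c hr
  have ht := hu.setLAverage_ball_ne_top c hr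
  have hone := ((h.of_one hu hpq.symm).isWeight_rpow_one_sub hpq.symm hu)
    |>.one_le_setLAverage_ball_mul_rpow hpq c hr
  simp only [rpow_one_sub_rpow_one_sub hpq.symm] at hone
  set m := ⨍⁻ x in ball c r, u x ∂volume
  have hm : m ^ (1 - p) ≤ ⨍⁻ x in ball c r, u x ^ (1 - p) ∂volume := by
    calc m ^ (1 - p)
        ≤ (⨍⁻ x in ball c r, u x ^ (1 - p) ∂volume) * m ^ (p - 1) * m ^ (1 - p) :=
          le_mul_of_one_le_left' hone
      _ = _ := by rw [mul_assoc, rpow_sub_one_mul_rpow_one_sub h0 ht, mul_one]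
  exact (hle c r hr).mono fun x hx => hx.trans (by gcongr)

lemma IsWeight.rpow_inv (hu : IsWeight u) (hs : 1 ≤ s) : IsWeight fun x => u x ^ s⁻¹ := by
  have : 0 < s := zero_lt_one.trans_le hs
  refine isWeight_iff.2 ⟨hu.measurable.pow_const _, ?_, fun c r hr => ?_⟩
  · filter_upwards [hu.ae_rpow_ne_zero s⁻¹, hu.ae_rpow_ne_top s⁻¹] with x h0 ht using
      ⟨pos_iff_ne_zero.2 h0, ht.lt_top⟩
  · have ht := hu.setLAverage_ball_ne_top c hr
    exact ne_top_of_le_ne_top (by finiteness) (laverage_rpow_inv_le hs hu.measurable.aemeasurable)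

lemma MemAp.exists_setLAverage_rpow_inv_le (h : MemAp 1 u) (hs : 0 < s) :
    ∃ C, C ≠ ∞ ∧ ∀ c r, 0 < r → ∀ᵐ x ∂volume.restrict (ball c r),
      (⨍⁻ y in ball c r, u y ∂volume) ^ s⁻¹ ≤ C * u x ^ s⁻¹ := by
  obtain ⟨A, hA, hA₁⟩ := memAp_one_iff.1 h
  refine ⟨A ^ s⁻¹, by finiteness, fun c r hr => (hA₁ c r hr).mono fun x hx => ?_⟩
  rw [← ENNReal.mul_rpow_of_nonneg _ _ (inv_nonneg.2 hs.le)]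
  gcongr

lemma MemAp.one_rpow_inv (h : MemAp 1 u) (hu : IsWeight u) (hs : 1 ≤ s) :
    MemAp 1 fun x => u x ^ s⁻¹ := by
  obtain ⟨C, hC, hle⟩ := h.exists_setLAverage_rpow_inv_le (zero_lt_one.trans_le hs)
  exact memAp_one_iff.2 ⟨C, hC, fun c r hr => (hle c r hr).mono fun x hx =>
    (laverage_rpow_inv_le hs hu.measurable.aemeasurable).trans hx⟩

lemma MemAp.memRH_rpow_inv (h : MemAp 1 u) (hs : 0 < s) : MemRH s fun x => u x ^ s⁻¹ := by
  obtain ⟨C, hC, hle⟩ := h.exists_setLAverage_rpow_inv_le hs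
  refine (memRH_iff hs).2 ⟨C, hC, fun c r hr => ?_⟩
  have := isFiniteMeasure_restrict_ball c r
  have := neZero_restrict_ball c hr
  simp only [ENNReal.rpow_inv_rpow hs.ne']
  rw [← ENNReal.rpow_inv_le_iff hs, ← laverage_const_mul hC]
  simpa only [laverage_const] using laverage_mono_ae (hle c r hr)

lemma MemRH.isWeight_rpow (h : MemRH s w) (hs : 0 < s) (hw : IsWeight w) :
    IsWeight fun x => w x ^ s := by
  obtain ⟨C, hC, hRH⟩ := (memRH_iff hs).1 h
  refine isWeight_iff.2 ⟨hw.measurable.pow_const _, ?_, fun c r hr => ?_⟩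
  · filter_upwards [hw.ae_rpow_ne_zero s, hw.ae_rpow_ne_top s] with x h0 ht using
      ⟨pos_iff_ne_zero.2 h0, ht.lt_top⟩
  · have ht := hw.setLAverage_ball_ne_top c hr
    exact ne_top_of_le_ne_top (by finiteness) (hRH c r hr)

lemma holderConjugate_mul_sub_one_add_one (hpq : p.HolderConjugate q) (hs : 0 < s) :
    (s * (p - 1) + 1).HolderConjugate (s⁻¹ * (q - 1) + 1) := by
  have hp := hpq.sub_one_pos
  have hq := hpq.symm.sub_one_pos
  have hpq' : (p - 1) * (q - 1) = 1 := by linear_combination hpq.mul_eq_add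
  refine Real.holderConjugate_iff.2 ⟨by nlinarith [mul_pos hs hp], ?_⟩
  have : s * (p - 1) + 1 ≠ 0 := by positivity
  have : s⁻¹ * (q - 1) + 1 ≠ 0 := by positivity
  field_simp
  linear_combination (-s) * hpq'

lemma MemAp.rpow (h : MemAp p w) (hRH : MemRH s w) (hpq : p.HolderConjugate q) (hs : 0 < s) :
    MemAp (s * (p - 1) + 1) fun x => w x ^ s := by
  obtain ⟨P, hP, hAp⟩ := (memAp_iff hpq).1 h
  obtain ⟨R, hR, hRs⟩ := (memRH_iff hs).1 hRH
  refine (memAp_iff (holderConjugate_mul_sub_one_add_one hpq hs)).2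
    ⟨(R * P) ^ s, by finiteness, fun c r hr => ?_⟩
  have hdual : ∀ x, (w x ^ s) ^ (1 - (s⁻¹ * (q - 1) + 1)) = w x ^ (1 - q) := fun x => by
    rw [← ENNReal.rpow_mul]
    congr 1
    field_simp
    ring
  simp only [hdual, add_sub_cancel_right]
  set m := ⨍⁻ x in ball c r, w x ∂volume
  set d := ⨍⁻ x in ball c r, w x ^ (1 - q) ∂volume
  calc (⨍⁻ x in ball c r, w x ^ s ∂volume) * d ^ (s * (p - 1))
      ≤ (R * m) ^ s * (d ^ (p - 1)) ^ s := by
        rw [mul_comm s, ENNReal.rpow_mul]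
        gcongr
        exact hRs c r hr
    _ = (R * (m * d ^ (p - 1))) ^ s := by
        rw [← ENNReal.mul_rpow_of_nonneg _ _ hs.le, mul_assoc]
    _ ≤ (R * P) ^ s := by
        gcongr
        exact hAp c r hr

theorem MemAp.exists_ae_eq_mul (h : MemAp p w) (hRH : MemRH s w) (hpq : p.HolderConjugate q)
    (hs : 1 ≤ s) (hw : IsWeight w) :
    ∃ v₁ v₂ : (Fin n → ℝ) → ℝ≥0∞, IsWeight v₁ ∧ IsWeight v₂ ∧ (∀ᵐ x, w x = v₁ x * v₂ x) ∧
      MemAp 1 v₁ ∧ MemRH s v₁ ∧ MemAp p v₂ ∧ MemRHInf v₂ := by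
  have hs₀ : 0 < s := zero_lt_one.trans_le hs
  obtain ⟨u₁, u₂, ⟨hu₁, hA₁⟩, ⟨hu₂, hA₂⟩, hwu⟩ := (h.rpow hRH hpq hs₀).exists_ae_eq_mul_rpow
    (holderConjugate_mul_sub_one_add_one hpq hs₀) (hRH.isWeight_rpow hs₀ hw)
  have hAq : MemAp q u₂ := hA₂.of_one hu₂ hpq.symm
  refine ⟨fun x => u₁ x ^ s⁻¹, fun x => u₂ x ^ (1 - p), hu₁.rpow_inv hs,
    hAq.isWeight_rpow_one_sub hpq.symm hu₂, ?_, hA₁.one_rpow_inv hu₁ hs, hA₁.memRH_rpow_inv hs₀,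
    hAq.rpow_one_sub hpq.symm, hA₂.memRHInf_rpow_one_sub hu₂ hpq⟩
  filter_upwards [hwu] with x hx
  rw [← ENNReal.rpow_rpow_inv hs₀.ne' (w x), hx,
    ENNReal.mul_rpow_of_nonneg _ _ (inv_nonneg.2 hs₀.le), ← ENNReal.rpow_mul (u₂ x)]
  congr 2
  field_simp
  ring

lemma exists_measurable_eq_mul_of_ae_eq_mul {α : Type*} [MeasurableSpace α] {μ : Measure α}
    {f g h : α → ℝ≥0∞} (hf : Measurable f) (hg : Measurable g) (hh : Measurable h)
    (hfgh : ∀ᵐ x ∂μ, f x = g x * h x) :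
    ∃ g' h', Measurable g' ∧ Measurable h' ∧ g =ᵐ[μ] g' ∧ h =ᵐ[μ] h' ∧
      ∀ x, f x = g' x * h' x := by
  set E := {x | f x = g x * h x}
  have hE : MeasurableSet E := measurableSet_eq_fun hf (hg.mul hh)
  refine ⟨E.piecewise g f, E.piecewise h 1, hg.piecewise hE hf, hh.piecewise hE measurable_one,
    ?_, ?_, fun x => ?_⟩
  · filter_upwards [hfgh] with x hx using (Set.piecewise_eq_of_mem E g f hx).symm
  · filter_upwards [hfgh] with x hx using (Set.piecewise_eq_of_mem E h 1 hx).symm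
  · by_cases hx : x ∈ E
    · rw [Set.piecewise_eq_of_mem _ _ _ hx, Set.piecewise_eq_of_mem _ _ _ hx]
      exact hx
    · simp only [Set.piecewise_eq_of_notMem _ _ _ hx, Pi.one_apply, mul_one]

end Factors

section Products

open Metric

variable {v₁ v₂ : (Fin n → ℝ) → ℝ≥0∞} {p q s : ℝ}

theorem MemAp.mul (h₁ : MemAp 1 v₁) (hw₁ : IsWeight v₁) (h₂ : MemAp p v₂) (hinf : MemRHInf v₂)
    (hw₂ : IsWeight v₂) (hpq : p.HolderConjugate q) : MemAp p fun x => v₁ x * v₂ x := by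
  have hp := hpq.sub_one_pos.le
  obtain ⟨A, hA, hle₁⟩ := h₁.exists_rpow_le hw₁ (sub_nonpos.2 hpq.symm.lt.le)
  obtain ⟨P, hP, hAp⟩ := (memAp_iff hpq).1 h₂
  obtain ⟨B, hB, hle₂⟩ := memRHInf_iff.1 hinf
  refine (memAp_iff hpq).2 ⟨B * A ^ (p - 1) * P, by finiteness, fun c r hr => ?_⟩
  have h0 := hw₁.setLAverage_ball_ne_zero c hr
  have ht := hw₁.setLAverage_ball_ne_top c hr
  have ht₂ := hw₂.setLAverage_ball_ne_top c hr
  have hAp := hAp c r hr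
  have hprod : ⨍⁻ x in ball c r, v₁ x * v₂ x ∂volume ≤
      B * (⨍⁻ x in ball c r, v₂ x ∂volume) * ⨍⁻ x in ball c r, v₁ x ∂volume := by
    simpa only [ENNReal.rpow_one] using
      laverage_mul_rpow_le (f := v₁) zero_le_one (by finiteness) (hle₂ c r hr)
  have hdual : ⨍⁻ x in ball c r, (v₁ x * v₂ x) ^ (1 - q) ∂volume ≤
      A * (⨍⁻ x in ball c r, v₁ x ∂volume) ^ (1 - q) *
        ⨍⁻ x in ball c r, v₂ x ^ (1 - q) ∂volume := by
    rw [← laverage_const_mul (by finiteness)]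
    refine laverage_mono_ae ?_
    filter_upwards [hle₁ c r hr, ae_restrict_of_ae hw₁.ae_ne_top, ae_restrict_of_ae hw₂.ae_ne_top]
      with x hx ht₁ ht₂
    rw [ENNReal.mul_rpow_of_ne_top ht₁ ht₂]
    gcongr
  set m₁ := ⨍⁻ x in ball c r, v₁ x ∂volume
  set m₂ := ⨍⁻ x in ball c r, v₂ x ∂volume
  set d₂ := ⨍⁻ x in ball c r, v₂ x ^ (1 - q) ∂volume
  calc (⨍⁻ x in ball c r, v₁ x * v₂ x ∂volume) *
        (⨍⁻ x in ball c r, (v₁ x * v₂ x) ^ (1 - q) ∂volume) ^ (p - 1)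
      ≤ B * m₂ * m₁ * (A * m₁ ^ (1 - q) * d₂) ^ (p - 1) := by gcongr
    _ = B * A ^ (p - 1) * (m₂ * d₂ ^ (p - 1)) * (m₁ * (m₁ ^ (1 - q)) ^ (p - 1)) := by
        rw [ENNReal.mul_rpow_of_nonneg _ _ hp, ENNReal.mul_rpow_of_nonneg _ _ hp]
        ring
    _ ≤ B * A ^ (p - 1) * P := by
        rw [mul_rpow_one_sub_rpow_sub_one hpq h0 ht, mul_one]
        gcongr

theorem MemRH.mul (h₁ : MemRH s v₁) (hA₁ : MemAp 1 v₁) (hw₁ : IsWeight v₁) (hinf : MemRHInf v₂)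
    (hw₂ : IsWeight v₂) (hs : 0 < s) : MemRH s fun x => v₁ x * v₂ x := by
  obtain ⟨A, hA, hle₁⟩ := memAp_one_iff.1 hA₁
  obtain ⟨R, hR, hRs⟩ := (memRH_iff hs).1 h₁
  obtain ⟨B, hB, hle₂⟩ := memRHInf_iff.1 hinf
  refine (memRH_iff hs).2 ⟨B * R * A, by finiteness, fun c r hr => ?_⟩
  have ht₁ := hw₁.setLAverage_ball_ne_top c hr
  have ht₂ := hw₂.setLAverage_ball_ne_top c hr
  have hRs := hRs c r hr
  have hlow : (⨍⁻ x in ball c r, v₁ x ∂volume) * ⨍⁻ x in ball c r, v₂ x ∂volume ≤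
      A * ⨍⁻ x in ball c r, v₁ x * v₂ x ∂volume := by
    rw [← laverage_const_mul hA, ← laverage_const_mul ht₁]
    refine laverage_mono_ae ?_
    filter_upwards [hle₁ c r hr] with x hx
    rw [← mul_assoc]
    gcongr
  set m₁ := ⨍⁻ x in ball c r, v₁ x ∂volume
  set m₂ := ⨍⁻ x in ball c r, v₂ x ∂volume
  calc ⨍⁻ x in ball c r, (v₁ x * v₂ x) ^ s ∂volume
      ≤ (B * m₂) ^ s * ⨍⁻ x in ball c r, v₁ x ^ s ∂volume :=
        laverage_mul_rpow_le hs.le (by finiteness) (hle₂ c r hr)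
    _ ≤ (B * m₂) ^ s * (R * m₁) ^ s := by gcongr
    _ = (B * R * (m₁ * m₂)) ^ s := by
        rw [← ENNReal.mul_rpow_of_nonneg _ _ hs.le]
        ring_nf
    _ ≤ (B * R * A * ⨍⁻ x in ball c r, v₁ x * v₂ x ∂volume) ^ s := by
        rw [mul_assoc (B * R)]
        gcongr

end Products

/-- Generalized factorization: for `1 < p, s < ∞`, a weight
`w ∈ A_p ∩ RH_s` iff `w = v₁ v₂` with `v₁ ∈ A_1 ∩ RH_s` and `v₂ ∈ A_p ∩ RH_∞`. -/
theorem statement11 (n : ℕ) (p s : ℝ) (hp : 1 < p) (hs : 1 < s)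
    (w : (Fin n → ℝ) → ℝ≥0∞) (hw : IsWeight w) :
    (MemAp p w ∧ MemRH s w) ↔
      ∃ v₁ v₂ : (Fin n → ℝ) → ℝ≥0∞, IsWeight v₁ ∧ IsWeight v₂ ∧
        (∀ x, w x = v₁ x * v₂ x) ∧
        MemAp 1 v₁ ∧ MemRH s v₁ ∧ MemAp p v₂ ∧ MemRHInf v₂ := by
  have hpq := Real.HolderConjugate.conjExponent hp
  constructor
  · rintro ⟨hAp, hRH⟩
    obtain ⟨v₁, v₂, hw₁, hw₂, hwv, hA₁, hRH₁, hAp₂, hinf₂⟩ :=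
      hAp.exists_ae_eq_mul hRH hpq hs.le hw
    obtain ⟨v₁', v₂', hv₁', hv₂', hv₁, hv₂, hwv'⟩ := exists_measurable_eq_mul_of_ae_eq_mul
      hw.measurable hw₁.measurable hw₂.measurable hwv
    exact ⟨v₁', v₂', hw₁.congr hv₁' hv₁, hw₂.congr hv₂' hv₂, hwv', hA₁.congr hv₁,
      hRH₁.congr hv₁, hAp₂.congr hv₂, hinf₂.congr hv₂⟩
  · rintro ⟨v₁, v₂, hw₁, hw₂, hwv, hA₁, hRH₁, hAp₂, hinf₂⟩
    obtain rfl : w = fun x => v₁ x * v₂ x := funext hwv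
    exact ⟨hA₁.mul hw₁ hAp₂ hinf₂ hw₂ hpq, hRH₁.mul hA₁ hw₁ hinf₂ hw₂ (zero_lt_one.trans hs)⟩
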